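/- For any two Borel probability measures μ0, μ1 on ℝ² with bounded support there exists a curve t ↦ μ_t (t ∈ [0,1]) of Borel probability measures on ℝ² with finite second moment such that μ_0 = μ0, μ_1 = μ1, W2(μ_s, μ_t) = |s − t| · W2(μ0, μ1) for all s, t ∈ [0,1], and for every N' ≥ 2 and every t ∈ [0,1] one has Ent_{N'}(μ_t) ≤ (1 − t)·Ent_{N'}(μ0) + t·Ent_{N'}(μ1), where entropies are taken with respect to the Lebesgue measure on ℝ². (This expresses that (ℝ², ‖·‖∞, Lebesgue) satisfies CD(0,2).) -/

import Mathlib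

open MeasureTheory ENNReal
open scoped Classical

noncomputable section

/-- Couplings of two measures on ℝ²: probability measures on the product with the given marginals. -/
def Couplings (μ ν : Measure (ℝ × ℝ)) : Set (Measure ((ℝ × ℝ) × (ℝ × ℝ))) :=
  {γ | IsProbabilityMeasure γ ∧ γ.map Prod.fst = μ ∧ γ.map Prod.snd = ν}

/-- Transport cost for the squared sup-norm distance on ℝ². -/
def costSup (γ : Measure ((ℝ × ℝ) × (ℝ × ℝ))) : ℝ≥0∞ :=
  ∫⁻ p, edist p.1 p.2 ^ 2 ∂γ

/-- The quadratic Wasserstein distance W₂ w.r.t. the sup-norm distance on ℝ². -/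
def W2 (μ ν : Measure (ℝ × ℝ)) : ℝ≥0∞ :=
  (⨅ γ ∈ Couplings μ ν, costSup γ) ^ (1/2 : ℝ)

/-- The Rényi-type entropy Ent_N(μ) = -∫ ρ^(1-1/N) dm, where ρ is the density of the
absolutely continuous part of μ with respect to m. -/
def EntN (N : ℝ) (m μ : Measure (ℝ × ℝ)) : ℝ :=
  - ∫ z, (μ.rnDeriv m z).toReal ^ (1 - 1/N) ∂m

/-- quadratic form -/
def QF (z : ℝ × ℝ) : ℝ := z.1 ^ 2 + z.2 ^ 2

lemma mink2 {a b c a' b' c' t : ℝ} (ht0 : 0 < t) (ht1 : t < 1)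
    (ha : 0 ≤ a) (hb : 0 ≤ b) (hc : c ^ 2 ≤ a * b)
    (ha' : 0 ≤ a') (hb' : 0 ≤ b') (hc' : c' ^ 2 ≤ a' * b') :
    (1 - t) * √(a * b - c ^ 2) + t * √(a' * b' - c' ^ 2) ≤
      √(((1 - t) * a + t * a') * ((1 - t) * b + t * b') - ((1 - t) * c + t * c') ^ 2) := by
  set d := √(a * b - c ^ 2) with hd
  set d' := √(a' * b' - c' ^ 2) with hd'
  have h1 : d ^ 2 = a * b - c ^ 2 := Real.sq_sqrt (by linarith)
  have h2 : d' ^ 2 = a' * b' - c' ^ 2 := Real.sq_sqrt (by linarith)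
  have hd0 : 0 ≤ d := Real.sqrt_nonneg _
  have hd0' : 0 ≤ d' := Real.sqrt_nonneg _
  apply Real.le_sqrt_of_sq_le
  have key : 2 * (d * d' + c * c') ≤ a * b' + a' * b := by
    have hm : (d * d' + c * c') ^ 2 ≤ (a * b) * (a' * b') := by
      have e1 : a * b = d ^ 2 + c ^ 2 := by linarith
      have e2 : a' * b' = d' ^ 2 + c' ^ 2 := by linarith
      rw [e1, e2]; nlinarith [sq_nonneg (d * c' - c * d')]
    have hm2 : (2 * (d * d' + c * c')) ^ 2 ≤ (a * b' + a' * b) ^ 2 := by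
      nlinarith [sq_nonneg (a * b' - a' * b)]
    exact abs_le_of_sq_le_sq' hm2 (by positivity) |>.2
  have : 0 < t * (1 - t) := mul_pos ht0 (by linarith)
  nlinarith [mul_le_mul_of_nonneg_left key this.le]

lemma det_prod (M : (ℝ × ℝ) →L[ℝ] (ℝ × ℝ)) :
    M.det = (M (1, 0)).1 * (M (0, 1)).2 - (M (0, 1)).1 * (M (1, 0)).2 := by
  have : M.det = LinearMap.det (M : (ℝ × ℝ) →ₗ[ℝ] (ℝ × ℝ)) := rfl
  rw [this, ← LinearMap.det_toMatrix (Module.Basis.finTwoProd ℝ), Matrix.det_fin_two]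
  simp [LinearMap.toMatrix_apply]

/-- second order necessary condition -/
lemma second_order {E : Type*} [NormedAddCommGroup E] [NormedSpace ℝ E] {f : E → ℝ}
    {f' : E → E →L[ℝ] ℝ} {f'' : E →L[ℝ] E →L[ℝ] ℝ} {z : E}
    (hf : ∀ w, HasFDerivAt f (f' w) w) (hf' : HasFDerivAt f' f'' z)
    (hmin : ∀ w, f z ≤ f w) (k : E) : 0 ≤ f'' k k := by
  have h0 : f' z = 0 := IsLocalMin.hasFDerivAt_eq_zero (f := f) (a := z)
    (Filter.Eventually.of_forall hmin) (hf z)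
  -- φ s = f (z + s k)
  have hline : ∀ s : ℝ, HasDerivAt (fun s : ℝ => z + s • k) k s := fun s => by
    simpa using ((hasDerivAt_id s).smul_const k).const_add z
  have h1 : ∀ s : ℝ, HasDerivAt (fun s : ℝ => f (z + s • k)) (f' (z + s • k) k) s := fun s =>
    (hf _).comp_hasDerivAt s (hline s)
  have h2 : HasDerivAt (fun s : ℝ => f' (z + s • k) k) (f'' k k) 0 := by
    have h3 : HasDerivAt (fun s : ℝ => f' (z + s • k)) (f'' k) 0 := by
      have : HasFDerivAt f' f'' (z + (0:ℝ) • k) := by simpa using hf'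
      exact this.comp_hasDerivAt (0:ℝ) (hline 0)
    simpa using h3.clm_apply (hasDerivAt_const (0:ℝ) k)
  by_contra hneg
  push Not at hneg
  have h4 : Filter.Tendsto (fun s : ℝ => s⁻¹ * (f' (z + s • k) k)) (nhdsWithin 0 (Set.Ioi 0))
      (nhds (f'' k k)) := by
    have := h2.tendsto_slope_zero_right
    simpa [h0] using this
  have h5 := h4.eventually (gt_mem_nhds hneg)
  obtain ⟨ε, hε, hε2⟩ := (mem_nhdsGT_iff_exists_Ioo_subset).1 h5
  have hε : (0:ℝ) < ε := hε
  obtain ⟨s, hs, hs2⟩ := exists_hasDerivAt_eq_slope (fun s : ℝ => f (z + s • k))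
    (fun s => f' (z + s • k) k) (half_pos hε)
    (fun s _ => (h1 s).continuousAt.continuousWithinAt) (fun s _ => h1 s)
  have h6 : s⁻¹ * (f' (z + s • k) k) < 0 := hε2 ⟨hs.1, by linarith [hs.2]⟩
  have h7 : 0 ≤ f' (z + s • k) k := by
    rw [hs2]; apply div_nonneg
    · have := hmin (z + (ε/2) • k); simpa using this
    · linarith
  have : 0 ≤ s⁻¹ * (f' (z + s • k) k) := mul_nonneg (inv_nonneg.2 hs.1.le) h7
  linarith

lemma QF_nonneg (z : ℝ × ℝ) : 0 ≤ QF z := by unfold QF; positivity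

lemma QF_ge (z : ℝ × ℝ) : ‖z‖ ^ 2 ≤ QF z := by
  unfold QF
  rw [Prod.norm_def]
  rcases max_choice ‖z.1‖ ‖z.2‖ with h | h <;> rw [h, Real.norm_eq_abs, sq_abs] <;> nlinarith [sq_nonneg z.1, sq_nonneg z.2]

lemma QF_le (z : ℝ × ℝ) : QF z ≤ 2 * ‖z‖ ^ 2 := by
  unfold QF
  have h1 : z.1 ^ 2 ≤ ‖z‖ ^ 2 := by
    rw [← sq_abs z.1, ← Real.norm_eq_abs]; exact pow_le_pow_left₀ (norm_nonneg _) (norm_fst_le z) 2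
  have h2 : z.2 ^ 2 ≤ ‖z‖ ^ 2 := by
    rw [← sq_abs z.2, ← Real.norm_eq_abs]; exact pow_le_pow_left₀ (norm_nonneg _) (norm_snd_le z) 2
  linarith

lemma exists_subgrad {G : ℝ × ℝ → ℝ} (hG : ConvexOn ℝ Set.univ G) (z : ℝ × ℝ) :
    ∃ p : (ℝ × ℝ) →L[ℝ] ℝ, ∀ k, G z + p k ≤ G (z + k) := by
  have hcont : Continuous G := by
    rw [← continuousOn_univ]; exact hG.continuousOn isOpen_univ
  have hconv : Convex ℝ {p : (ℝ × ℝ) × ℝ | p.1 ∈ Set.univ ∧ G p.1 < p.2} := hG.convex_strict_epigraph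
  have hopen : IsOpen {p : (ℝ × ℝ) × ℝ | p.1 ∈ Set.univ ∧ G p.1 < p.2} := by
    simp only [Set.mem_univ, true_and]
    exact isOpen_lt (hcont.comp continuous_fst) continuous_snd
  obtain ⟨L, hL⟩ := geometric_hahn_banach_open_point hconv hopen (x := (z, G z)) (by simp)
  have hdec : ∀ w r, L (w, r) = L (w, 0) + r * L (0, 1) := by
    intro w r
    have : ((w, r) : (ℝ × ℝ) × ℝ) = (w, 0) + r • (0, 1) := by ext <;> simp
    rw [this, map_add, map_smul]; simp
  have hc : L (0, 1) < 0 := by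
    have := hL (z, G z + 1) (by simp)
    rw [hdec, hdec z (G z)] at this
    linarith
  set c := L (0, 1) with hcdef
  refine ⟨(-c)⁻¹ • (L.comp (ContinuousLinearMap.inl ℝ (ℝ × ℝ) ℝ)), fun k => ?_⟩
  have h1 : ∀ r, G (z + k) < r → L (k, 0) + r * c < G z * c := by
    intro r hr
    have := hL (z + k, r) (by simpa using hr)
    rw [hdec, hdec z (G z)] at this
    have e : L (z + k, 0) = L (z, 0) + L (k, 0) := by
      rw [← map_add]; simp
    linarith
  have h2 : L (k, 0) + G (z + k) * c ≤ G z * c := by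
    apply _root_.le_of_forall_pos_le_add
    intro ε hε
    have := h1 (G (z + k) + ε / (-c)) (by have : 0 < ε / (-c) := div_pos hε (by linarith)
                                          linarith)
    have e : ε / (-c) * c = -ε := by
      have hc0 : c ≠ 0 := hc.ne
      rw [div_neg, neg_mul, div_mul_cancel₀ _ hc0]
    nlinarith
  simp only [smul_apply, ContinuousLinearMap.comp_apply, ContinuousLinearMap.inl_apply,
    smul_eq_mul]
  have h3 : (-c) * (G z + (-c)⁻¹ * L (k, 0)) ≤ (-c) * G (z + k) := by
    have : (-c) * (G z + (-c)⁻¹ * L (k, 0)) = -c * G z + L (k, 0) := by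
      have : (-c) ≠ 0 := by linarith
      rw [mul_add, ← mul_assoc, mul_inv_cancel₀ this, one_mul]
    rw [this]; linarith
  exact le_of_mul_le_mul_left h3 (by linarith)

lemma c11 {G : ℝ × ℝ → ℝ} (hG : ConvexOn ℝ Set.univ G) {κ : ℝ}
    (hsd : ∀ z k, G (z + k) + G (z - k) ≤ 2 * G z + 2 * κ * QF k) :
    ∃ p : ℝ × ℝ → ((ℝ × ℝ) →L[ℝ] ℝ), (∀ z k, G z + p z k ≤ G (z + k)) ∧
      (∀ z k, G (z + k) ≤ G z + p z k + 2 * κ * QF k) := by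
  choose p hp using fun z => exists_subgrad hG z
  refine ⟨p, hp, fun z k => ?_⟩
  have h1 := hsd z k
  have h2 := hp z (-k)
  rw [← sub_eq_add_neg, map_neg] at h2
  linarith

lemma hasFDerivAt_of_quad {G : ℝ × ℝ → ℝ} {p : (ℝ × ℝ) →L[ℝ] ℝ} {κ : ℝ} {z : ℝ × ℝ}
    (h1 : ∀ k, G z + p k ≤ G (z + k)) (h2 : ∀ k, G (z + k) ≤ G z + p k + κ * QF k) :
    HasFDerivAt G p z := by
  rw [hasFDerivAt_iff_isLittleO_nhds_zero]
  have : (fun k => G (z + k) - G z - p k) =O[nhds 0] fun k => ‖k‖ ^ 2 := by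
    apply Asymptotics.IsBigO.of_bound (2 * |κ|)
    refine Filter.Eventually.of_forall fun k => ?_
    rw [Real.norm_eq_abs, abs_of_nonneg (by linarith [h1 k])]
    have := QF_le k
    have h0 := QF_nonneg k
    rw [norm_pow, norm_norm]
    have : κ * QF k ≤ |κ| * QF k := mul_le_mul_of_nonneg_right (le_abs_self _) h0
    have : |κ| * QF k ≤ |κ| * (2 * ‖k‖ ^ 2) := mul_le_mul_of_nonneg_left (QF_le k) (abs_nonneg _)
    linarith [h2 k]
  exact this.trans_isLittleO (by
    simpa using (Asymptotics.isLittleO_norm_pow_id (E' := ℝ × ℝ) (n := 2) (by norm_num)))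

lemma lip_of_quad {G : ℝ × ℝ → ℝ} {p : ℝ × ℝ → ((ℝ × ℝ) →L[ℝ] ℝ)} {κ : ℝ} (hκ : 0 ≤ κ)
    (h1 : ∀ z k, G z + p z k ≤ G (z + k))
    (h2 : ∀ z k, G (z + k) ≤ G z + p z k + κ * QF k) (z d : ℝ × ℝ) :
    ‖p (z + d) - p z‖ ≤ 8 * κ * ‖d‖ := by
  have key : ∀ k, (p (z + d) - p z) k ≤ κ * (2 * (‖d‖ + ‖k‖) ^ 2) := by
    intro k
    have a1 := h2 z (d + k)
    have a2 := h1 (z + d) k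
    have a3 := h1 z d
    rw [← add_assoc, map_add] at a1
    have a4 : κ * QF (d + k) ≤ κ * (2 * (‖d‖ + ‖k‖) ^ 2) := by
      apply mul_le_mul_of_nonneg_left _ hκ
      refine (QF_le _).trans ?_
      have := norm_add_le d k
      gcongr
    rw [sub_apply]
    linarith
  rcases eq_or_ne d 0 with rfl | hd
  · simp
  have hd : 0 < ‖d‖ := norm_pos_iff.2 hd
  apply ContinuousLinearMap.opNorm_le_of_unit_norm (by positivity)
  intro x hx
  have h3 := key (‖d‖ • x)
  have h4 := key (-(‖d‖ • x))
  rw [map_neg, norm_neg] at h4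
  rw [norm_smul, hx, norm_norm, mul_one] at h3 h4
  rw [map_smul, smul_eq_mul] at h3 h4
  rw [Real.norm_eq_abs, abs_le]
  constructor <;> nlinarith

/-- smooth, uniformly convex and uniformly smooth cost -/
structure NiceCost (h : ℝ × ℝ → ℝ) (m K : ℝ) : Prop where
  mpos : 0 < m
  smooth : ContDiff ℝ 2 h
  lower : ∀ v k, h v + fderiv ℝ h v k + m * QF k ≤ h (v + k)
  upper : ∀ v k, h (v + k) ≤ h v + fderiv ℝ h v k + K * QF k

lemma NiceCost.mK {h m K} (hn : NiceCost h m K) : m ≤ K := by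
  have h1 := hn.lower 0 (1, 0)
  have h2 := hn.upper 0 (1, 0)
  simp [QF] at h1 h2
  linarith

lemma NiceCost.diff {h m K} (hn : NiceCost h m K) : Differentiable ℝ h :=
  hn.smooth.differentiable (by norm_num)

lemma NiceCost.surj {h m K} (hn : NiceCost h m K) (ξ : (ℝ × ℝ) →L[ℝ] ℝ) :
    ∃ v, fderiv ℝ h v = ξ := by
  have hcont : Continuous (fun v => h v - ξ v) := hn.diff.continuous.sub ξ.continuous
  have hlim : Filter.Tendsto (fun v => h v - ξ v) (Filter.cocompact (ℝ × ℝ)) Filter.atTop := by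
    set c := ‖fderiv ℝ h 0 - ξ‖
    have h1 : ∀ v, h 0 + ‖v‖ * (m * ‖v‖ - c) ≤ h v - ξ v := by
      intro v
      have a1 := hn.lower 0 v
      rw [zero_add] at a1
      have a2 := (fderiv ℝ h 0 - ξ).le_opNorm v
      rw [Real.norm_eq_abs, sub_apply] at a2
      have a3 := (abs_le.1 a2).1
      have a4 := mul_le_mul_of_nonneg_left (QF_ge v) hn.mpos.le
      nlinarith
    apply Filter.tendsto_atTop_mono h1
    apply Filter.tendsto_atTop_add_const_left
    have hnorm := tendsto_norm_cocompact_atTop (E := ℝ × ℝ)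
    apply hnorm.atTop_mul_atTop₀
    apply Filter.tendsto_atTop_add_const_right
    exact hnorm.const_mul_atTop hn.mpos
  obtain ⟨v, hv⟩ := hcont.exists_forall_le hlim
  refine ⟨v, ?_⟩
  have h2 : HasFDerivAt (fun v => h v - ξ v) (fderiv ℝ h v - ξ) v :=
    (hn.diff v).hasFDerivAt.sub ξ.hasFDerivAt
  have := IsLocalMin.hasFDerivAt_eq_zero (Filter.Eventually.of_forall hv) h2
  exact sub_eq_zero.1 this

lemma NiceCost.inj {h m K} (hn : NiceCost h m K) (v w : ℝ × ℝ) :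
    2 * m * ‖v - w‖ ≤ ‖fderiv ℝ h v - fderiv ℝ h w‖ := by
  have a1 := hn.lower v (w - v)
  have a2 := hn.lower w (v - w)
  rw [add_sub_cancel] at a1 a2
  have e : QF (w - v) = QF (v - w) := by simp [QF]; ring
  have e2 : fderiv ℝ h v (w - v) = - fderiv ℝ h v (v - w) := by rw [← map_neg, neg_sub]
  have a3 := (fderiv ℝ h v - fderiv ℝ h w).le_opNorm (v - w)
  rw [Real.norm_eq_abs, sub_apply] at a3
  have a4 := (abs_le.1 a3).2
  rw [e, e2] at a1
  have a5 := mul_le_mul_of_nonneg_left (QF_ge (v - w)) hn.mpos.le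
  rcases eq_or_ne v w with rfl | hne
  · simp
  have : 0 < ‖v - w‖ := norm_pos_iff.2 (sub_ne_zero.2 hne)
  apply le_of_mul_le_mul_right _ this
  nlinarith

lemma convexOn_of_support {f : ℝ × ℝ → ℝ}
    (hf : ∀ z, ∃ p : (ℝ × ℝ) →L[ℝ] ℝ, ∀ k, f z + p k ≤ f (z + k)) : ConvexOn ℝ Set.univ f := by
  refine ⟨convex_univ, fun x _ y _ a b ha hb hab => ?_⟩
  obtain ⟨p, hp⟩ := hf (a • x + b • y)
  have h1 := hp (x - (a • x + b • y))
  have h2 := hp (y - (a • x + b • y))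
  rw [add_sub_cancel, map_sub] at h1 h2
  rw [map_add, map_smul, map_smul] at h1 h2
  simp only [smul_eq_mul] at *
  have hb' : b = 1 - a := by linarith
  subst hb'
  nlinarith [mul_le_mul_of_nonneg_left h1 ha, mul_le_mul_of_nonneg_left h2 hb]

/-- derivative of the quadratic form -/
def DQF (z : ℝ × ℝ) : (ℝ × ℝ) →L[ℝ] ℝ :=
  (2 * z.1) • ContinuousLinearMap.fst ℝ ℝ ℝ + (2 * z.2) • ContinuousLinearMap.snd ℝ ℝ ℝ

/-- `DQF` as a linear map -/
def DQL : (ℝ × ℝ) →L[ℝ] (ℝ × ℝ) →L[ℝ] ℝ :=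
  (2 : ℝ) • ((ContinuousLinearMap.fst ℝ ℝ ℝ).smulRight (ContinuousLinearMap.fst ℝ ℝ ℝ) +
    (ContinuousLinearMap.snd ℝ ℝ ℝ).smulRight (ContinuousLinearMap.snd ℝ ℝ ℝ))

lemma DQL_apply (z k : ℝ × ℝ) : DQL z k = 2 * (z.1 * k.1 + z.2 * k.2) := by
  simp [DQL]; ring

lemma QF_add (z k : ℝ × ℝ) : QF (z + k) = QF z + DQL z k + QF k := by
  rw [DQL_apply]; simp [QF]; ring

lemma hasFDerivAt_QF (z : ℝ × ℝ) : HasFDerivAt QF (DQL z) z := by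
  apply hasFDerivAt_of_quad (κ := 1)
  · intro k; rw [QF_add]; linarith [QF_nonneg k]
  · intro k; rw [QF_add]; linarith

/-- linear algebra at a point -/
lemma linalg {H : (ℝ × ℝ) →L[ℝ] (ℝ × ℝ) →L[ℝ] ℝ} {M : (ℝ × ℝ) →L[ℝ] (ℝ × ℝ)} {t m : ℝ}
    (ht0 : 0 < t) (ht1 : t < 1) (hm : 0 < m)
    (Hsymm : ∀ k l, H k l = H l k) (Hpos : ∀ k, m * QF k ≤ H k k)
    (Ssymm : ∀ k l, H (M k) l = H (M l) k)
    (h1 : ∀ k, t * H (M k) k ≤ H k k) (h2 : ∀ k, -((1 - t) * H (M k) k) ≤ H k k) :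
    (1 - t) * √|(ContinuousLinearMap.id ℝ (ℝ × ℝ) - t • M).det| +
      t * √|(ContinuousLinearMap.id ℝ (ℝ × ℝ) + (1 - t) • M).det| ≤ 1 := by
  have hdec : ∀ k l : ℝ × ℝ, H k l = k.1 * l.1 * H (1,0) (1,0) + k.1 * l.2 * H (1,0) (0,1) +
      k.2 * l.1 * H (1,0) (0,1) + k.2 * l.2 * H (0,1) (0,1) := by
    intro k l
    have ek : k = k.1 • ((1:ℝ), (0:ℝ)) + k.2 • ((0:ℝ), (1:ℝ)) := by ext <;> simp
    have el : l = l.1 • ((1:ℝ), (0:ℝ)) + l.2 • ((0:ℝ), (1:ℝ)) := by ext <;> simp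
    conv_lhs => rw [ek, el]
    simp only [map_add, map_smul, add_apply, smul_apply, smul_eq_mul]
    rw [Hsymm (0,1) (1,0)]; ring
  have hM : ∀ k : ℝ × ℝ, M k = (k.1 * (M (1,0)).1 + k.2 * (M (0,1)).1,
      k.1 * (M (1,0)).2 + k.2 * (M (0,1)).2) := by
    intro k
    have ek : k = k.1 • ((1:ℝ), (0:ℝ)) + k.2 • ((0:ℝ), (1:ℝ)) := by ext <;> simp
    conv_lhs => rw [ek]
    simp only [map_add, map_smul]
    ext <;> simp
  rw [det_prod, det_prod]
  simp only [sub_apply, add_apply, smul_apply, ContinuousLinearMap.id_apply, Prod.fst_sub,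
    Prod.snd_sub, Prod.fst_add, Prod.snd_add, Prod.smul_fst, Prod.smul_snd, smul_eq_mul]
  have Sy := Ssymm (1,0) (0,1)
  rw [hdec (M (1,0)), hdec (M (0,1))] at Sy
  have A1 : ∀ k : ℝ × ℝ, 0 ≤ H k k - t * H (M k) k := fun k => by linarith [h1 k]
  have B1 : ∀ k : ℝ × ℝ, 0 ≤ H k k + (1 - t) * H (M k) k := fun k => by linarith [h2 k]
  have P1 := Hpos
  simp only [QF] at P1
  generalize ha : (M (1,0)).1 = a at *
  generalize hb : (M (0,1)).1 = b at *
  generalize hc : (M (1,0)).2 = c at *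
  generalize hd : (M (0,1)).2 = d at *
  generalize hp : H (1,0) (1,0) = p at *
  generalize hq : H (1,0) (0,1) = q at *
  generalize hr : H (0,1) (0,1) = r at *
  simp only [mul_one, mul_zero, zero_mul, add_zero, zero_add] at Sy
  -- matrices
  have psd : ∀ x y w : ℝ, (∀ k : ℝ × ℝ, 0 ≤ x * k.1 ^ 2 + 2 * w * k.1 * k.2 + y * k.2 ^ 2) →
      0 ≤ x ∧ 0 ≤ y ∧ w ^ 2 ≤ x * y := by
    intro x y w hk
    have hx : 0 ≤ x := by simpa using hk (1, 0)
    have hy : 0 ≤ y := by simpa using hk (0, 1)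
    refine ⟨hx, hy, ?_⟩
    have k1 := hk (w, -x)
    have k2 := hk (y, -w)
    have k3 := hk (-w, 1)
    have k4 := hk (1, -w)
    simp only at k1 k2 k3 k4
    rcases hx.eq_or_lt with h0 | h0
    · rcases hy.eq_or_lt with h0' | h0'
      · rw [← h0, ← h0'] at k4 ⊢; nlinarith
      · by_contra hcon
        push Not at hcon
        have : 0 ≤ y * (x * y - w ^ 2) := by nlinarith
        nlinarith
    · by_contra hcon
      push Not at hcon
      have : 0 ≤ x * (x * y - w ^ 2) := by nlinarith
      nlinarith
  obtain ⟨A11, A22, A12⟩ := psd (p - t * (a * p + c * q)) (r - t * (b * q + d * r))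
    (q - t * (a * q + c * r)) (fun k => by
      have := A1 k
      rw [hdec, hdec (M k), hM k] at this
      simp only at this
      have e : p * b + q * d = a * q + c * r := by linarith
      refine this.trans (le_of_eq ?_)
      linear_combination (-t * k.1 * k.2) * e)
  obtain ⟨B11, B22, B12⟩ := psd (p + (1 - t) * (a * p + c * q)) (r + (1 - t) * (b * q + d * r))
    (q + (1 - t) * (a * q + c * r)) (fun k => by
      have := B1 k
      rw [hdec, hdec (M k), hM k] at this
      simp only at this
      have e : p * b + q * d = a * q + c * r := by linarith
      refine this.trans (le_of_eq ?_)
      linear_combination ((1 - t) * k.1 * k.2) * e)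
  have hp0 : 0 < p := by
    have := P1 (1, 0); rw [hdec] at this; simp at this; linarith
  have hD : 0 < p * r - q ^ 2 := by
    have := P1 (q, -p); rw [hdec] at this; simp only at this
    have h3 : 0 < m * (q ^ 2 + (-p) ^ 2) := mul_pos hm (by nlinarith [sq_nonneg q, mul_pos hp0 hp0])
    have h4 : 0 < p * (p * r - q ^ 2) := by nlinarith
    exact (mul_pos_iff_of_pos_left hp0).1 h4
  have e : p * b + q * d = a * q + c * r := by linarith
  have mk := mink2 ht0 ht1 A11 A22 A12 B11 B22 B12
  have eA : (p - t * (a * p + c * q)) * (r - t * (b * q + d * r)) - (q - t * (a * q + c * r)) ^ 2 =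
      (p * r - q ^ 2) * ((1 - t * a) * (1 - t * d) - (0 - t * b) * (0 - t * c)) := by
    linear_combination (-t * (q - t * (a * q + c * r))) * e
  have eB : (p + (1 - t) * (a * p + c * q)) * (r + (1 - t) * (b * q + d * r)) -
      (q + (1 - t) * (a * q + c * r)) ^ 2 =
      (p * r - q ^ 2) * ((1 + (1 - t) * a) * (1 + (1 - t) * d) - (0 + (1 - t) * b) * (0 + (1 - t) * c)) := by
    linear_combination ((1 - t) * (q + (1 - t) * (a * q + c * r))) * e
  have eC : ((1 - t) * (p - t * (a * p + c * q)) + t * (p + (1 - t) * (a * p + c * q))) *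
      ((1 - t) * (r - t * (b * q + d * r)) + t * (r + (1 - t) * (b * q + d * r))) -
      ((1 - t) * (q - t * (a * q + c * r)) + t * (q + (1 - t) * (a * q + c * r))) ^ 2 = p * r - q ^ 2 := by
    ring
  rw [eA, eB, eC, Real.sqrt_mul hD.le, Real.sqrt_mul hD.le] at mk
  have hs : 0 < √(p * r - q ^ 2) := Real.sqrt_pos.2 hD
  have nA : 0 ≤ (1 - t * a) * (1 - t * d) - (0 - t * b) * (0 - t * c) := by
    have : 0 ≤ (p * r - q ^ 2) * ((1 - t * a) * (1 - t * d) - (0 - t * b) * (0 - t * c)) := by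
      rw [← eA]; linarith
    exact nonneg_of_mul_nonneg_right this hD
  have nB : 0 ≤ (1 + (1 - t) * a) * (1 + (1 - t) * d) - (0 + (1 - t) * b) * (0 + (1 - t) * c) := by
    have : 0 ≤ (p * r - q ^ 2) * ((1 + (1 - t) * a) * (1 + (1 - t) * d) - (0 + (1 - t) * b) * (0 + (1 - t) * c)) := by
      rw [← eB]; linarith
    exact nonneg_of_mul_nonneg_right this hD
  rw [abs_of_nonneg nA, abs_of_nonneg nB]
  apply le_of_mul_le_mul_left _ hs
  linarith

lemma NiceCost.convex {h m K} (hn : NiceCost h m K) : ConvexOn ℝ Set.univ h := by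
  apply convexOn_of_support
  intro z
  refine ⟨fderiv ℝ h z, fun k => ?_⟩
  have := hn.lower z k
  have := mul_nonneg hn.mpos.le (QF_nonneg k)
  linarith

lemma QF_smul (c : ℝ) (k : ℝ × ℝ) : QF (c • k) = c ^ 2 * QF k := by simp [QF]; ring

lemma DQL_self (k : ℝ × ℝ) : DQL k k = 2 * QF k := by rw [DQL_apply, QF]; ring

lemma aff_deriv (c : ℝ) (x z : ℝ × ℝ) :
    HasFDerivAt (fun z : ℝ × ℝ => c • (z - x)) (c • ContinuousLinearMap.id ℝ (ℝ × ℝ)) z :=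
  ((hasFDerivAt_id z).sub_const x).const_smul c

theorem geom {h : ℝ × ℝ → ℝ} {m K : ℝ} (hn : NiceCost h m K) {t : ℝ} (ht0 : 0 < t) (ht1 : t < 1)
    {Γ : Set ((ℝ × ℝ) × (ℝ × ℝ))} (hne : Γ.Nonempty) {φ ψ : ℝ × ℝ → ℝ}
    (hle : ∀ p ∈ Γ, ∀ q ∈ Γ, φ p.1 + ψ q.2 ≤ h (q.2 - p.1))
    (heq : ∀ p ∈ Γ, φ p.1 + ψ p.2 = h (p.2 - p.1)) :
    ∃ (V : ℝ × ℝ → ℝ × ℝ) (C : NNReal), LipschitzWith C V ∧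
      (∀ p ∈ Γ, V ((1 - t) • p.1 + t • p.2) = p.2 - p.1) ∧
      ∀ p ∈ Γ, DifferentiableAt ℝ V ((1 - t) • p.1 + t • p.2) →
        (1 - t) * √|(ContinuousLinearMap.id ℝ (ℝ × ℝ) -
            t • fderiv ℝ V ((1 - t) • p.1 + t • p.2)).det| +
          t * √|(ContinuousLinearMap.id ℝ (ℝ × ℝ) +
            (1 - t) • fderiv ℝ V ((1 - t) • p.1 + t • p.2)).det| ≤ 1 := by
  have ht1' : 0 < 1 - t := by linarith
  have hK : 0 < K := hn.mpos.trans_le hn.mK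
  set C : ℝ := K / t with hC
  set κ : ℝ := K / (1 - t) + K / t with hκ
  have hC0 : 0 < C := by positivity
  have hκ0 : 0 < κ := by positivity
  set ell : ((ℝ × ℝ) × (ℝ × ℝ)) → ℝ × ℝ → ℝ := fun p z =>
    φ p.1 - t * h (t⁻¹ • (z - p.1)) + C * QF z with hell
  set r : ((ℝ × ℝ) × (ℝ × ℝ)) → ℝ × ℝ → ℝ := fun q z =>
    -ψ q.2 + (1 - t) * h ((-(1 - t)⁻¹) • (z - q.2)) + C * QF z with hr
  have ell_le_r : ∀ p ∈ Γ, ∀ q ∈ Γ, ∀ z, ell p z ≤ r q z := by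
    intro p hp q hq z
    have h1 := hn.convex.2 (Set.mem_univ (t⁻¹ • (z - p.1)))
      (Set.mem_univ ((-(1 - t)⁻¹) • (z - q.2))) ht0.le ht1'.le (by ring)
    have e : t • t⁻¹ • (z - p.1) + (1 - t) • (-(1 - t)⁻¹) • (z - q.2) = q.2 - p.1 := by
      rw [smul_smul, smul_smul, mul_inv_cancel₀ ht0.ne', mul_neg, mul_inv_cancel₀ ht1'.ne']
      simp
    rw [e] at h1
    have h2 := hle p hp q hq
    simp only [smul_eq_mul] at h1
    simp only [hell, hr]; linarith
  have ell_eq_r : ∀ p ∈ Γ, ell p ((1 - t) • p.1 + t • p.2) = r p ((1 - t) • p.1 + t • p.2) := by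
    intro p hp
    have e1 : t⁻¹ • ((1 - t) • p.1 + t • p.2 - p.1) = p.2 - p.1 := by
      rw [show (1 - t) • p.1 + t • p.2 - p.1 = t • (p.2 - p.1) by module, smul_smul,
        inv_mul_cancel₀ ht0.ne', one_smul]
    have e2 : (-(1 - t)⁻¹) • ((1 - t) • p.1 + t • p.2 - p.2) = p.2 - p.1 := by
      rw [show (1 - t) • p.1 + t • p.2 - p.2 = (1 - t) • (p.1 - p.2) by module, smul_smul,
        neg_mul, inv_mul_cancel₀ ht1'.ne']; simp
    simp only [hell, hr, e1, e2]
    have := heq p hp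
    linarith
  have ell_supp : ∀ p z k, ell p z + (C • DQL z - fderiv ℝ h (t⁻¹ • (z - p.1))) k ≤ ell p (z + k) := by
    intro p z k
    have h1 := hn.upper (t⁻¹ • (z - p.1)) (t⁻¹ • k)
    rw [← smul_add, QF_smul, map_smul] at h1
    have e : z - p.1 + k = z + k - p.1 := by abel
    rw [e] at h1
    simp only [hell, QF_add, sub_apply, smul_apply, smul_eq_mul] at h1 ⊢
    have h2 := mul_le_mul_of_nonneg_left h1 ht0.le
    have e3 : t * (h (t⁻¹ • (z - p.1)) + t⁻¹ * (fderiv ℝ h (t⁻¹ • (z - p.1))) k + K * (t⁻¹ ^ 2 * QF k))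
      = t * h (t⁻¹ • (z - p.1)) + (fderiv ℝ h (t⁻¹ • (z - p.1))) k + C * QF k := by
      rw [hC]; field_simp
    rw [e3] at h2
    linarith
  have ell_conv : ∀ p, ConvexOn ℝ Set.univ (ell p) := fun p =>
    convexOn_of_support fun z => ⟨_, ell_supp p z⟩
  have r_sd : ∀ q z k, r q (z + k) + r q (z - k) ≤ 2 * r q z + 2 * κ * QF k := by
    intro q z k
    have h1 := hn.upper ((-(1 - t)⁻¹) • (z - q.2)) ((-(1 - t)⁻¹) • k)
    have h2 := hn.upper ((-(1 - t)⁻¹) • (z - q.2)) ((-(1 - t)⁻¹) • (-k))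
    rw [← smul_add, QF_smul, map_smul] at h1 h2
    rw [show z - q.2 + k = z + k - q.2 by abel] at h1
    rw [show z - q.2 + -k = z - k - q.2 by abel, map_neg] at h2
    have e4 : QF (-k) = QF k := by simp [QF]
    have e5 : QF (z - k) = QF z - DQL z k + QF k := by
      rw [sub_eq_add_neg, QF_add, map_neg, e4]; ring
    simp only [hr, QF_add, e5, e4, smul_eq_mul] at h1 h2 ⊢
    have h3 := mul_le_mul_of_nonneg_left (add_le_add h1 h2) ht1'.le
    have e6 : (1 - t) * (K * ((-(1 - t)⁻¹) ^ 2 * QF k)) = (κ - C) * QF k := by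
      rw [hκ, hC]; field_simp; ring
    nlinarith
  -- Perron family
  set F : Set (ℝ × ℝ → ℝ) := {g | ConvexOn ℝ Set.univ g ∧ ∀ q ∈ Γ, ∀ z, g z ≤ r q z} with hF
  set G : ℝ × ℝ → ℝ := fun z => sSup ((fun g => g z) '' F) with hG
  obtain ⟨p0, hp0⟩ := hne
  have ellF : ∀ p ∈ Γ, ell p ∈ F := fun p hp => ⟨ell_conv p, fun q hq z => ell_le_r p hp q hq z⟩
  have hbdd : ∀ z, BddAbove ((fun g => g z) '' F) := fun z => ⟨r p0 z, by
    rintro _ ⟨g, hg, rfl⟩; exact hg.2 p0 hp0 z⟩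
  have hFG : ∀ g ∈ F, ∀ z, g z ≤ G z := fun g hg z => le_csSup (hbdd z) ⟨g, hg, rfl⟩
  have hGub : ∀ z b, (∀ g ∈ F, g z ≤ b) → G z ≤ b := fun z b hb =>
    csSup_le ⟨_, ell p0, ellF p0 hp0, rfl⟩ (by rintro _ ⟨g, hg, rfl⟩; exact hb g hg)
  have hGr : ∀ q ∈ Γ, ∀ z, G z ≤ r q z := fun q hq z => hGub z _ fun g hg => hg.2 q hq z
  have hGconv : ConvexOn ℝ Set.univ G := by
    refine ⟨convex_univ, fun x _ y _ a b ha hb hab => ?_⟩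
    apply hGub
    intro g hg
    refine (hg.1.2 (Set.mem_univ x) (Set.mem_univ y) ha hb hab).trans ?_
    simp only [smul_eq_mul]
    exact add_le_add (mul_le_mul_of_nonneg_left (hFG g hg x) ha)
      (mul_le_mul_of_nonneg_left (hFG g hg y) hb)
  have hGsd : ∀ z k, G (z + k) + G (z - k) ≤ 2 * G z + 2 * κ * QF k := by
    intro z k
    have hg' : (fun w => (1/2 : ℝ) * G (w + k) + (1/2 : ℝ) * G (w - k) - κ * QF k) ∈ F := by
      constructor
      · refine ⟨convex_univ, fun x _ y _ a b ha hb hab => ?_⟩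
        have c1 := hGconv.2 (Set.mem_univ (x + k)) (Set.mem_univ (y + k)) ha hb hab
        have c2 := hGconv.2 (Set.mem_univ (x - k)) (Set.mem_univ (y - k)) ha hb hab
        have hb' : b = 1 - a := by linarith
        subst hb'
        rw [show a • (x + k) + (1 - a) • (y + k) = a • x + (1 - a) • y + k by module] at c1
        rw [show a • (x - k) + (1 - a) • (y - k) = a • x + (1 - a) • y - k by module] at c2
        simp only [smul_eq_mul] at c1 c2 ⊢
        linarith
      · intro q hq w
        have := r_sd q w k
        have := hGr q hq (w + k)
        have := hGr q hq (w - k)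
        simp only; linarith
    have := hFG _ hg' z
    linarith
  obtain ⟨p, hp1, hp2⟩ := c11 hGconv hGsd
  have hGd : ∀ z, HasFDerivAt G (p z) z := fun z => hasFDerivAt_of_quad (hp1 z) (hp2 z)
  have hplip : ∀ z d, ‖p (z + d) - p z‖ ≤ 8 * (2 * κ) * ‖d‖ :=
    lip_of_quad (by positivity) hp1 hp2
  -- derivatives
  have ell_d : ∀ q z, HasFDerivAt (ell q) (C • DQL z - fderiv ℝ h (t⁻¹ • (z - q.1))) z := by
    intro q z
    have h1 := ((hn.diff (t⁻¹ • (z - q.1))).hasFDerivAt.comp z (aff_deriv t⁻¹ q.1 z)).const_mul t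
    have h2 := (h1.const_sub (φ q.1)).add ((hasFDerivAt_QF z).const_mul C)
    refine h2.congr_fderiv ?_
    ext <;> simp [ht0.ne'] <;> ring
  have r_d : ∀ q z, HasFDerivAt (r q) (C • DQL z - fderiv ℝ h ((-(1 - t)⁻¹) • (z - q.2))) z := by
    intro q z
    have h1 := ((hn.diff ((-(1 - t)⁻¹) • (z - q.2))).hasFDerivAt.comp z
      (aff_deriv (-(1 - t)⁻¹) q.2 z)).const_mul (1 - t)
    have h2 := (h1.const_add (-ψ q.2)).add ((hasFDerivAt_QF z).const_mul C)
    refine h2.congr_fderiv ?_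
    ext <;> simp [ht1'.ne'] <;> ring
  -- the map V
  choose V hV using fun z => hn.surj (C • DQL z - p z)
  have hVlip : ∀ z w, 2 * m * ‖V z - V w‖ ≤ (C * ‖DQL‖ + 16 * κ) * ‖z - w‖ := by
    intro z w
    refine (hn.inj _ _).trans ?_
    rw [hV, hV, show C • DQL z - p z - (C • DQL w - p w) = C • DQL (z - w) - (p z - p w) by
      rw [map_sub]; module]
    refine (norm_sub_le _ _).trans ?_
    have a1 := hplip w (z - w)
    rw [add_sub_cancel] at a1
    have a2 : ‖C • DQL (z - w)‖ ≤ C * (‖DQL‖ * ‖z - w‖) := by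
      rw [norm_smul, Real.norm_of_nonneg hC0.le]
      exact mul_le_mul_of_nonneg_left (DQL.le_opNorm _) hC0.le
    linarith
  have hm := hn.mpos
  have hpt : ∀ q ∈ Γ, V ((1 - t) • q.1 + t • q.2) = q.2 - q.1 := by
    intro q hq
    set z := (1 - t) • q.1 + t • q.2 with hz
    have hmin : ∀ w, G z - ell q z ≤ G w - ell q w := by
      intro w
      have a1 := hFG _ (ellF q hq) w
      have a2 := hGr q hq z
      rw [← ell_eq_r q hq] at a2
      linarith
    have h1 := IsLocalMin.hasFDerivAt_eq_zero (Filter.Eventually.of_forall hmin)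
      ((hGd z).sub (ell_d q z))
    have e1 : t⁻¹ • (z - q.1) = q.2 - q.1 := by
      rw [hz, show (1 - t) • q.1 + t • q.2 - q.1 = t • (q.2 - q.1) by module, smul_smul,
        inv_mul_cancel₀ ht0.ne', one_smul]
    rw [e1] at h1
    have h2 := hn.inj (V z) (q.2 - q.1)
    have h3 : fderiv ℝ h (V z) - fderiv ℝ h (q.2 - q.1) = 0 := by
      rw [hV, ← neg_eq_zero, ← h1]; abel
    rw [h3, norm_zero] at h2
    have h4 : ‖V z - (q.2 - q.1)‖ ≤ 0 := by
      by_contra hcon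
      push Not at hcon
      have : 0 < 2 * m * ‖V z - (q.2 - q.1)‖ := by positivity
      linarith
    exact sub_eq_zero.1 (norm_le_zero_iff.1 h4)
  refine ⟨V, Real.toNNReal ((C * ‖DQL‖ + 16 * κ) / (2 * m)), ?_, hpt, ?_⟩
  · apply LipschitzWith.of_dist_le_mul
    intro z w
    rw [dist_eq_norm, dist_eq_norm, Real.coe_toNNReal _ (by positivity), div_mul_eq_mul_div,
      le_div_iff₀ (by positivity)]
    linarith [hVlip z w]
  intro q hq hdiff
  have hVz := hpt q hq
  have hcontact := ell_eq_r q hq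
  set z := (1 - t) • q.1 + t • q.2 with hz
  set M := fderiv ℝ V z with hM
  have hMd : HasFDerivAt V M z := hdiff.hasFDerivAt
  have hcd : ContDiff ℝ 1 (fderiv ℝ h) := hn.smooth.fderiv_right (by norm_num)
  have hdd : Differentiable ℝ (fderiv ℝ h) := hcd.differentiable (by norm_num)
  set H := fderiv ℝ (fderiv ℝ h) (V z) with hH
  have hHd : HasFDerivAt (fderiv ℝ h) H (V z) := (hdd _).hasFDerivAt
  have hpd : HasFDerivAt p (C • DQL - H.comp M) z := by
    have h1 : HasFDerivAt (fun w => C • DQL w - fderiv ℝ h (V w)) (C • DQL - H.comp M) z :=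
      (DQL.hasFDerivAt.const_smul C).sub (hHd.comp z hMd)
    refine h1.congr_of_eventuallyEq (Filter.Eventually.of_forall fun w => ?_)
    simp only [hV]; abel
  have hDsymm : ∀ k l, DQL k l = DQL l k := fun k l => by rw [DQL_apply, DQL_apply]; ring
  have e1 : t⁻¹ • (z - q.1) = V z := by
    rw [hVz, hz, show (1 - t) • q.1 + t • q.2 - q.1 = t • (q.2 - q.1) by module, smul_smul,
      inv_mul_cancel₀ ht0.ne', one_smul]
  have e2 : (-(1 - t)⁻¹) • (z - q.2) = V z := by
    rw [hVz, hz, show (1 - t) • q.1 + t • q.2 - q.2 = (1 - t) • (q.1 - q.2) by module, smul_smul,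
      neg_mul, inv_mul_cancel₀ ht1'.ne']; simp
  apply linalg (H := H) ht0 ht1 hm
  · exact fun k l => second_derivative_symmetric (fun y => (hn.diff y).hasFDerivAt) hHd k l
  · intro k
    have h1 : ∀ w, HasFDerivAt (fun w => h w - fderiv ℝ h (V z) w - m * QF ((1:ℝ) • (w - V z)))
        (fderiv ℝ h w - fderiv ℝ h (V z) - m • DQL (w - V z)) w := by
      intro w
      have h2 := ((hasFDerivAt_QF ((1:ℝ) • (w - V z))).comp w (aff_deriv 1 (V z) w)).const_mul m
      refine (((hn.diff w).hasFDerivAt.sub (fderiv ℝ h (V z)).hasFDerivAt).sub h2).congr_fderiv ?_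
      ext <;> simp
    have h3 : HasFDerivAt (fun w => fderiv ℝ h w - fderiv ℝ h (V z) - m • DQL (w - V z))
        (H - m • DQL) (V z) := by
      have h4 : HasFDerivAt (fun w => DQL (w - V z)) DQL (V z) := by
        have := DQL.hasFDerivAt.comp (V z) ((hasFDerivAt_id (V z)).sub_const (V z))
        exact this.congr_fderiv (by ext <;> simp)
      exact (hHd.sub_const _).sub (h4.const_smul m)
    have := second_order h1 h3 (fun w => by
      have := hn.lower (V z) (w - V z)
      rw [add_sub_cancel, map_sub] at this
      simp only [sub_self, one_smul]
      have e : QF 0 = 0 := by simp [QF]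
      rw [e]; linarith) k
    simp only [sub_apply, smul_apply, smul_eq_mul, DQL_self] at this
    have := mul_nonneg hm.le (QF_nonneg k)
    linarith
  · intro k l
    have := second_derivative_symmetric hGd hpd k l
    simp only [sub_apply, smul_apply, ContinuousLinearMap.comp_apply, hDsymm k l] at this
    linarith
  · intro k
    have h3 : HasFDerivAt (fun w => p w - (C • DQL w - fderiv ℝ h (t⁻¹ • (w - q.1))))
        ((C • DQL - H.comp M) - (C • DQL - H.comp (t⁻¹ • ContinuousLinearMap.id ℝ (ℝ × ℝ)))) z := by
      refine hpd.sub ((DQL.hasFDerivAt.const_smul C).sub ?_)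
      have : HasFDerivAt (fderiv ℝ h) H (t⁻¹ • (z - q.1)) := by rw [e1]; exact hHd
      exact this.comp z (aff_deriv _ _ _)
    have := second_order (fun w => (hGd w).sub (ell_d q w)) h3 (fun w => by
      have a1 := hFG _ (ellF q hq) w
      have a2 := hGr q hq z
      rw [← hcontact] at a2
      simp only [Pi.sub_apply]
      linarith) k
    simp only [sub_apply, smul_apply, ContinuousLinearMap.comp_apply, map_smul,
      ContinuousLinearMap.id_apply, smul_eq_mul] at this
    have h5 : H (M k) k ≤ t⁻¹ * H k k := by linarith
    have h6 := mul_le_mul_of_nonneg_left h5 ht0.le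
    rwa [mul_inv_cancel_left₀ ht0.ne'] at h6
  · intro k
    have h3 : HasFDerivAt (fun w => (C • DQL w - fderiv ℝ h ((-(1 - t)⁻¹) • (w - q.2))) - p w)
        ((C • DQL - H.comp ((-(1 - t)⁻¹) • ContinuousLinearMap.id ℝ (ℝ × ℝ))) -
          (C • DQL - H.comp M)) z := by
      refine ((DQL.hasFDerivAt.const_smul C).sub ?_).sub hpd
      have : HasFDerivAt (fderiv ℝ h) H ((-(1 - t)⁻¹) • (z - q.2)) := by rw [e2]; exact hHd
      exact this.comp z (aff_deriv _ _ _)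
    have := second_order (fun w => (r_d q w).sub (hGd w)) h3 (fun w => by
      have a1 := hFG _ (ellF q hq) z
      have a2 := hGr q hq w
      rw [hcontact] at a1
      simp only [Pi.sub_apply]
      linarith) k
    simp only [sub_apply, smul_apply, ContinuousLinearMap.comp_apply, map_smul,
      ContinuousLinearMap.id_apply, smul_eq_mul] at this
    have h5 : -H (M k) k ≤ (1 - t)⁻¹ * H k k := by linarith
    have h6 := mul_le_mul_of_nonneg_left h5 ht1'.le
    rw [mul_inv_cancel_left₀ ht1'.ne'] at h6
    linarith

set_option linter.unusedSectionVars false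

open Filter Topology in
lemma hb_ext {E : Type*} [AddCommGroup E] [Module ℝ E] (N : E → ℝ)
    (N_hom : ∀ c : ℝ, 0 < c → ∀ x, N (c • x) = c * N x)
    (N_add : ∀ x y, N (x + y) ≤ N x + N y) (x : E) :
    ∃ g : E →ₗ[ℝ] ℝ, g x = N x ∧ ∀ y, g y ≤ N y := by
  have N0 : N 0 = 0 := by
    have := N_hom 2 (by norm_num) 0
    rw [smul_zero] at this; linarith
  have H : ∀ c : ℝ, c • x = 0 → (RingHom.id ℝ) c • N x = 0 := by
    intro c hc
    rcases smul_eq_zero.1 hc with h | h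
    · simp [h]
    · simp [h, N0]
  obtain ⟨g, hg1, hg2⟩ := exists_extension_of_le_sublinear
    (LinearPMap.mkSpanSingleton' (σ := RingHom.id ℝ) x (N x) H) N N_hom N_add (by
      rintro ⟨y, hy⟩
      obtain ⟨r, rfl⟩ := Submodule.mem_span_singleton.1 hy
      rw [LinearPMap.mkSpanSingleton'_apply]
      simp only [RingHom.id_apply, smul_eq_mul]
      rcases lt_trichotomy r 0 with h | h | h
      · have h1 := N_hom (-r) (by linarith) x
        have h2 := N_add (r • x) ((-r) • x)
        rw [neg_smul, add_neg_cancel, N0, ← neg_smul, h1] at h2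
        linarith
      · simp [h, N0]
      · rw [N_hom r h])
  refine ⟨g, ?_, hg2⟩
  have := hg1 ⟨x, Submodule.mem_span_singleton_self x⟩
  exact this.trans (LinearPMap.mkSpanSingleton'_apply_self x (N x) H _)

section kant
variable {X : Type*} [MetricSpace X] [CompactSpace X] [MeasurableSpace X] [BorelSpace X]

def KS (μ0 μ1 : Measure X) (f : C(X × X, ℝ)) : Set ℝ :=
  {r | ∃ φ ψ : C(X, ℝ), (∀ x y, f (x, y) ≤ φ x + ψ y) ∧ r = ∫ x, φ x ∂μ0 + ∫ y, ψ y ∂μ1}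

lemma cint (μ : Measure X) [IsFiniteMeasure μ] (f : C(X, ℝ)) : Integrable f μ :=
  (map_continuous f).integrable_of_hasCompactSupport (HasCompactSupport.of_compactSpace _)

lemma cint2 (μ : Measure (X × X)) [IsFiniteMeasure μ] (f : C(X × X, ℝ)) : Integrable f μ :=
  (map_continuous f).integrable_of_hasCompactSupport (HasCompactSupport.of_compactSpace _)

variable (μ0 μ1 : Measure X) [IsProbabilityMeasure μ0] [IsProbabilityMeasure μ1]

lemma KS_lower {f : C(X × X, ℝ)} {r : ℝ} (hr : r ∈ KS μ0 μ1 f) {m : ℝ} (hm : ∀ p, m ≤ f p) :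
    m ≤ r := by
  obtain ⟨φ, ψ, h, rfl⟩ := hr
  have h1 : ∀ y, m - ψ y ≤ ∫ x, φ x ∂μ0 := by
    intro y
    have : ∫ x, (m - ψ y) ∂μ0 ≤ ∫ x, φ x ∂μ0 :=
      integral_mono (integrable_const _) (cint _ _) (fun x => by
        have := h x y; have := hm (x, y); simp only; linarith)
    simpa using this
  have : ∫ y, (m - ∫ x, φ x ∂μ0) ∂μ1 ≤ ∫ y, ψ y ∂μ1 :=
    integral_mono (integrable_const _) (cint _ _) (fun y => by
      have := h1 y; simp only; linarith)
  simp at this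
  linarith

lemma KS_bdd (f : C(X × X, ℝ)) : BddBelow (KS μ0 μ1 f) :=
  ⟨-‖f‖, fun r hr => KS_lower μ0 μ1 hr (fun p => neg_le_of_abs_le (by
    simpa using f.norm_coe_le_norm p))⟩

lemma KS_ne (f : C(X × X, ℝ)) : (KS μ0 μ1 f).Nonempty :=
  ⟨_, ContinuousMap.const X ‖f‖, 0, fun x y => by
    simpa using (le_abs_self _).trans (f.norm_coe_le_norm (x, y)), rfl⟩

lemma KS_add {f g : C(X × X, ℝ)} {r s : ℝ} (hr : r ∈ KS μ0 μ1 f) (hs : s ∈ KS μ0 μ1 g) :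
    r + s ∈ KS μ0 μ1 (f + g) := by
  obtain ⟨φ, ψ, h, rfl⟩ := hr
  obtain ⟨φ', ψ', h', rfl⟩ := hs
  refine ⟨φ + φ', ψ + ψ', fun x y => ?_, ?_⟩
  · have := h x y; have := h' x y; simp; linarith
  · simp only [ContinuousMap.add_apply]
    rw [integral_add (cint _ _) (cint _ _), integral_add (cint _ _) (cint _ _)]; ring

lemma KS_smul {f : C(X × X, ℝ)} {r c : ℝ} (hc : 0 < c) (hr : r ∈ KS μ0 μ1 f) :
    c * r ∈ KS μ0 μ1 (c • f) := by
  obtain ⟨φ, ψ, h, rfl⟩ := hr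
  refine ⟨c • φ, c • ψ, fun x y => ?_, ?_⟩
  · have := mul_le_mul_of_nonneg_left (h x y) hc.le
    simp; linarith
  · simp only [ContinuousMap.smul_apply, smul_eq_mul, integral_const_mul]; ring

def KN (f : C(X × X, ℝ)) : ℝ := sInf (KS μ0 μ1 f)

lemma KN_le {f : C(X × X, ℝ)} {r : ℝ} (hr : r ∈ KS μ0 μ1 f) : KN μ0 μ1 f ≤ r :=
  csInf_le (KS_bdd μ0 μ1 f) hr

lemma KN_add (f g : C(X × X, ℝ)) : KN μ0 μ1 (f + g) ≤ KN μ0 μ1 f + KN μ0 μ1 g := by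
  refine le_of_forall_pos_lt_add fun ε hε => ?_
  obtain ⟨r, hr, hr'⟩ := Real.lt_sInf_add_pos (KS_ne μ0 μ1 f) (half_pos hε)
  obtain ⟨s, hs, hs'⟩ := Real.lt_sInf_add_pos (KS_ne μ0 μ1 g) (half_pos hε)
  have := KN_le μ0 μ1 (KS_add μ0 μ1 hr hs)
  unfold KN at *
  linarith

lemma KN_hom_le (c : ℝ) (hc : 0 < c) (f : C(X × X, ℝ)) :
    KN μ0 μ1 (c • f) ≤ c * KN μ0 μ1 f := by
  refine le_of_forall_pos_lt_add fun ε hε => ?_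
  obtain ⟨r, hr, hr'⟩ := Real.lt_sInf_add_pos (KS_ne μ0 μ1 f) (div_pos hε hc)
  have := KN_le μ0 μ1 (KS_smul μ0 μ1 hc hr)
  have h2 := mul_lt_mul_of_pos_left hr' hc
  have : c * (ε / c) = ε := by field_simp
  unfold KN at *
  linarith

lemma KN_hom (c : ℝ) (hc : 0 < c) (f : C(X × X, ℝ)) :
    KN μ0 μ1 (c • f) = c * KN μ0 μ1 f := by
  apply le_antisymm (KN_hom_le _ _ c hc f)
  have := KN_hom_le μ0 μ1 c⁻¹ (inv_pos.2 hc) (c • f)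
  rw [inv_smul_smul₀ hc.ne'] at this
  calc c * KN μ0 μ1 f ≤ c * (c⁻¹ * KN μ0 μ1 (c • f)) := by gcongr
    _ = _ := by field_simp

open Filter Topology

lemma exists_riesz (L : C(X × X, ℝ) →ₗ[ℝ] ℝ) (hL : ∀ f : C(X × X, ℝ), (∀ p, 0 ≤ f p) → 0 ≤ L f)
    (h1 : L 1 = 1) : ∃ π : Measure (X × X), IsProbabilityMeasure π ∧
      ∀ f : C(X × X, ℝ), ∫ p, f p ∂π = L f := by
  let Λ : CompactlySupportedContinuousMap (X × X) ℝ →ₚ[ℝ] ℝ :=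
    PositiveLinearMap.mk₀
      { toFun := fun f => L f.toContinuousMap
        map_add' := fun f g => by rw [← map_add]; rfl
        map_smul' := fun c f => by simp only [RingHom.id_apply]; rw [← map_smul]; rfl }
      (fun f hf => hL _ (fun p => hf p))
  have key : ∀ f : C(X × X, ℝ), ∫ p, f p ∂(RealRMK.rieszMeasure Λ) = L f := by
    intro f
    exact RealRMK.integral_rieszMeasure Λ ⟨f, HasCompactSupport.of_compactSpace _⟩
  refine ⟨RealRMK.rieszMeasure Λ, ?_, key⟩
  have := key 1
  rw [h1] at this
  simp at this
  exact ⟨by rwa [measureReal_def, ENNReal.toReal_eq_one_iff] at this⟩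

lemma kant_seq (c : C(X × X, ℝ)) : ∃ π : Measure (X × X), IsProbabilityMeasure π ∧
    π.map Prod.fst = μ0 ∧ π.map Prod.snd = μ1 ∧
    ∀ ε > 0, ∃ φ ψ : C(X, ℝ), (∀ x y, φ x + ψ y ≤ c (x, y)) ∧
      ∫ p, c p ∂π - ε < ∫ x, φ x ∂μ0 + ∫ y, ψ y ∂μ1 := by
  obtain ⟨L, hLc, hL⟩ := hb_ext (KN μ0 μ1) (KN_hom μ0 μ1) (KN_add μ0 μ1) (-c)
  have hmar : ∀ φ ψ : C(X, ℝ), L (φ.comp ContinuousMap.fst + ψ.comp ContinuousMap.snd)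
      ≤ ∫ x, φ x ∂μ0 + ∫ y, ψ y ∂μ1 := fun φ ψ =>
    (hL _).trans (KN_le _ _ ⟨φ, ψ, fun x y => by simp, rfl⟩)
  have hmar' : ∀ φ ψ : C(X, ℝ), L (φ.comp ContinuousMap.fst + ψ.comp ContinuousMap.snd)
      = ∫ x, φ x ∂μ0 + ∫ y, ψ y ∂μ1 := by
    intro φ ψ
    apply le_antisymm (hmar φ ψ)
    have := hmar (-φ) (-ψ)
    have e : (-φ).comp ContinuousMap.fst + (-ψ).comp ContinuousMap.snd =
      -(φ.comp (ContinuousMap.fst : C(X × X, X)) + ψ.comp ContinuousMap.snd) := by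
      ext p; simp; ring
    rw [e, map_neg] at this
    simp only [ContinuousMap.neg_apply, integral_neg] at this
    linarith
  obtain ⟨π, hπ, hrepr⟩ := exists_riesz L (fun f hf => by
    have := (hL (-f)).trans (KN_le μ0 μ1 ⟨0, 0, fun x y => by simpa using hf (x, y), rfl⟩)
    simp at this; exact this) (by
    have := hmar' 1 0
    have e : (1 : C(X, ℝ)).comp ContinuousMap.fst + (0 : C(X, ℝ)).comp ContinuousMap.snd =
      (1 : C(X × X, ℝ)) := by ext; simp
    rw [e] at this
    simpa using this)
  have e0 : π.map Prod.fst = μ0 := by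
    have := Measure.isProbabilityMeasure_map (μ := π) (measurable_fst : Measurable (Prod.fst : X × X → X)).aemeasurable
    refine ext_of_forall_integral_eq_of_IsFiniteMeasure fun f => ?_
    rw [integral_map measurable_fst.aemeasurable (by fun_prop)]
    have h1 := hrepr (f.toContinuousMap.comp ContinuousMap.fst + (0 : C(X, ℝ)).comp ContinuousMap.snd)
    rw [hmar'] at h1
    simpa using h1
  have e1 : π.map Prod.snd = μ1 := by
    have := Measure.isProbabilityMeasure_map (μ := π) (measurable_snd : Measurable (Prod.snd : X × X → X)).aemeasurable
    refine ext_of_forall_integral_eq_of_IsFiniteMeasure fun f => ?_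
    rw [integral_map measurable_snd.aemeasurable (by fun_prop)]
    have h1 := hrepr ((0 : C(X, ℝ)).comp ContinuousMap.fst + f.toContinuousMap.comp ContinuousMap.snd)
    rw [hmar'] at h1
    simpa using h1
  refine ⟨π, hπ, e0, e1, fun ε hε => ?_⟩
  obtain ⟨r, ⟨φ, ψ, h, rfl⟩, hr'⟩ := Real.lt_sInf_add_pos (KS_ne μ0 μ1 (-c)) hε
  refine ⟨-φ, -ψ, fun x y => ?_, ?_⟩
  · have := h x y
    simp at this ⊢; linarith
  · have h1 := hrepr c
    rw [map_neg] at hLc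
    unfold KN at hLc
    simp only [ContinuousMap.neg_apply, integral_neg]
    linarith

lemma hyper_lim {f : ℕ → ℝ} {a b : ℝ} (h : ∀ᶠ n in atTop, f n ∈ Set.Icc a b) :
    ∃ l, Tendsto f (hyperfilter ℕ) (𝓝 l) := by
  have h1 : ∀ᶠ n in (hyperfilter ℕ : Filter ℕ), f n ∈ Set.Icc a b :=
    h.filter_mono Nat.hyperfilter_le_atTop
  obtain ⟨l, -, hl⟩ := (isCompact_Icc (a := a) (b := b)).ultrafilter_le_nhds ((hyperfilter ℕ).map f)
    (by rw [Ultrafilter.coe_map, le_principal_iff]; exact h1)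
  exact ⟨l, hl⟩

theorem kant (c : C(X × X, ℝ)) : ∃ π : Measure (X × X), IsProbabilityMeasure π ∧
    π.map Prod.fst = μ0 ∧ π.map Prod.snd = μ1 ∧
    (∀ π' : Measure (X × X), IsProbabilityMeasure π' → π'.map Prod.fst = μ0 → π'.map Prod.snd = μ1 →
      ∫ p, c p ∂π ≤ ∫ p, c p ∂π') ∧
    ∃ (Γ : Set (X × X)) (φ ψ : X → ℝ), (∀ᵐ p ∂π, p ∈ Γ) ∧
      (∀ p ∈ Γ, ∀ q ∈ Γ, φ p.1 + ψ q.2 ≤ c (p.1, q.2)) ∧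
      (∀ p ∈ Γ, φ p.1 + ψ p.2 = c p) := by
  obtain ⟨π, hπ, h0, h1, hseq⟩ := kant_seq μ0 μ1 c
  have hI : ∀ (π' : Measure (X × X)), IsProbabilityMeasure π' → π'.map Prod.fst = μ0 →
      π'.map Prod.snd = μ1 → ∀ φ ψ : C(X, ℝ),
      ∫ p, (c p - φ p.1 - ψ p.2) ∂π' = ∫ p, c p ∂π' - (∫ x, φ x ∂μ0 + ∫ y, ψ y ∂μ1) := by
    intro π' _ h0' h1' φ ψ
    have i1 := cint2 π' (φ.comp ContinuousMap.fst)
    have i2 := cint2 π' (ψ.comp ContinuousMap.snd)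
    have i3 := cint2 π' c
    have := integral_sub (i3.sub i1) i2
    have := integral_sub i3 i1
    rw [← h0', ← h1', integral_map measurable_fst.aemeasurable (by fun_prop),
      integral_map measurable_snd.aemeasurable (by fun_prop)]
    simp at *
    linarith
  refine ⟨π, hπ, h0, h1, ?_, ?_⟩
  · intro π' hπ' h0' h1'
    refine le_of_forall_pos_lt_add fun ε hε => ?_
    obtain ⟨φ, ψ, hle, hlt⟩ := hseq ε hε
    have := hI π' hπ' h0' h1' φ ψ
    have h3 : 0 ≤ ∫ p, (c p - φ p.1 - ψ p.2) ∂π' := integral_nonneg fun p => by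
      have := hle p.1 p.2
      simp only [Pi.zero_apply]; linarith
    linarith
  choose φ ψ hle hlt using fun n : ℕ => hseq ((1/2)^n) (by positivity)
  let g : ℕ → X × X → ℝ := fun n p => c p - φ n p.1 - ψ n p.2
  have hg0 : ∀ n p, 0 ≤ g n p := fun n p => by
    have := hle n p.1 p.2
    simp only [g]; linarith
  have hgc : ∀ n, Continuous (g n) := fun n => by simp only [g]; fun_prop
  have hgl : ∀ n, ∫⁻ p, ENNReal.ofReal (g n p) ∂π ≤ ENNReal.ofReal ((1/2)^n) := by
    intro n
    have hgi : Integrable (g n) π := cint2 π ⟨g n, hgc n⟩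
    rw [← ofReal_integral_eq_lintegral_ofReal hgi (ae_of_all _ (hg0 n))]
    apply ENNReal.ofReal_le_ofReal
    have := hI π hπ h0 h1 (φ n) (ψ n)
    have := hlt n
    simp only [g]; linarith
  have hsum : ∫⁻ p, ∑' n, ENNReal.ofReal (g n p) ∂π ≠ ∞ := by
    rw [lintegral_tsum fun n => (hgc n).measurable.ennreal_ofReal.aemeasurable]
    refine ((ENNReal.tsum_le_tsum hgl).trans_lt ?_).ne
    rw [← ENNReal.ofReal_tsum_of_nonneg (fun n => by positivity) summable_geometric_two]
    exact ENNReal.ofReal_lt_top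
  have hae := ae_lt_top' (AEMeasurable.tsum
    fun n => (hgc n).measurable.ennreal_ofReal.aemeasurable) hsum
  have hae2 : ∀ᵐ p ∂π, Tendsto (fun n => g n p) atTop (𝓝 0) := by
    filter_upwards [hae] with p hp
    have := ENNReal.tendsto_atTop_zero_of_tsum_ne_top hp.ne
    have h2 := (ENNReal.tendsto_toReal (by simp : (0:ℝ≥0∞) ≠ ∞)).comp this
    simpa [Function.comp_def, ENNReal.toReal_ofReal (hg0 _ p)] using h2
  obtain ⟨⟨x0, y0⟩, hp0⟩ := hae2.exists
  set M := ‖c‖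
  have hM : ∀ p, c p ≤ M ∧ -M ≤ c p := fun p => by
    have := abs_le.1 (c.norm_coe_le_norm p); exact ⟨this.2, this.1⟩
  have hev : ∀ p, Tendsto (fun n => g n p) atTop (𝓝 0) → ∀ᶠ n in atTop, g n p < 1 := fun p hp =>
    hp.eventually (gt_mem_nhds one_pos)
  have hA : ∀ p : X × X, Tendsto (fun n => g n p) atTop (𝓝 0) →
      ∃ l, Tendsto (fun n => φ n p.1 - φ n x0) (hyperfilter ℕ) (𝓝 l) := by
    intro p hp
    refine hyper_lim (a := -2*M-1) (b := 2*M+1) ?_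
    filter_upwards [hev _ hp, hev _ hp0] with n h1 h2
    simp only [g] at h1 h2
    have a1 := hle n x0 p.2
    have a2 := hle n p.1 y0
    have := hM (x0, p.2)
    have := hM (p.1, y0)
    have := hM p
    have := hM (x0, y0)
    constructor <;> linarith
  have hB : ∀ p : X × X, Tendsto (fun n => g n p) atTop (𝓝 0) →
      ∃ l, Tendsto (fun n => ψ n p.2 + φ n x0) (hyperfilter ℕ) (𝓝 l) := by
    intro p hp
    refine hyper_lim (a := -3*M-2) (b := M) ?_
    filter_upwards [hev _ hp, hev _ hp0] with n h1 h2
    simp only [g] at h1 h2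
    have a1 := hle n x0 p.2
    have a2 := hle n p.1 y0
    have := hM (x0, p.2)
    have := hM (p.1, y0)
    have := hM p
    have := hM (x0, y0)
    constructor <;> linarith
  refine ⟨{p | Tendsto (fun n => g n p) atTop (𝓝 0)},
    fun x => limUnder (hyperfilter ℕ : Filter ℕ) (fun n => φ n x - φ n x0),
    fun y => limUnder (hyperfilter ℕ : Filter ℕ) (fun n => ψ n y + φ n x0), hae2, ?_, ?_⟩
  · intro p hp q hq
    have l1 := tendsto_nhds_limUnder (hA p hp)
    have l2 := tendsto_nhds_limUnder (hB q hq)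
    refine le_of_tendsto (l1.add l2) (Eventually.of_forall fun n => ?_)
    have := hle n p.1 q.2
    linarith
  · intro p hp
    have l1 := tendsto_nhds_limUnder (hA p hp)
    have l2 := tendsto_nhds_limUnder (hB p hp)
    have hp' : Tendsto (fun n => g n p) (hyperfilter ℕ) (𝓝 0) := hp.mono_left Nat.hyperfilter_le_atTop
    have l3 := (l1.add l2).add hp'
    rw [add_zero] at l3
    refine tendsto_nhds_unique l3 ?_
    refine tendsto_const_nhds.congr fun n => ?_
    simp only [g]; ring

end kant

def ra (ε u : ℝ) : ℝ := √(u ^ 2 + ε ^ 2)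

lemma ra_pos {ε : ℝ} (hε : 0 < ε) (u : ℝ) : 0 < ra ε u := Real.sqrt_pos.2 (by positivity)
lemma ra_sq (ε u : ℝ) : ra ε u ^ 2 = u ^ 2 + ε ^ 2 := Real.sq_sqrt (by positivity)

lemma ra_ge {ε : ℝ} (hε : 0 < ε) (u : ℝ) : ε ≤ ra ε u :=
  abs_le_of_sq_le_sq' (by rw [ra_sq]; nlinarith) (ra_pos hε u).le |>.2

lemma ra_ge_abs {ε : ℝ} (hε : 0 < ε) (u : ℝ) : |u| ≤ ra ε u :=
  abs_le_of_sq_le_sq (by rw [ra_sq]; nlinarith) (ra_pos hε u).le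

lemma ra_le {ε : ℝ} (hε : 0 < ε) (u : ℝ) : ra ε u ≤ |u| + ε :=
  abs_le_of_sq_le_sq' (by rw [ra_sq]; nlinarith [abs_nonneg u, sq_abs u]) (by positivity) |>.2

lemma ra_low {ε : ℝ} (hε : 0 < ε) (u k : ℝ) : ra ε u + u / ra ε u * k ≤ ra ε (u + k) := by
  have p1 := ra_pos hε u
  have p2 := ra_pos hε (u + k)
  have s1 := ra_sq ε u
  have s2 := ra_sq ε (u + k)
  have e : ra ε u + u / ra ε u * k = (u * (u + k) + ε ^ 2) / ra ε u := by
    field_simp; rw [s1]; ring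
  rw [e, div_le_iff₀ p1]
  apply (abs_le_of_sq_le_sq' _ (by positivity)).2
  rw [mul_pow, s1, s2]
  nlinarith [sq_nonneg (ε * k)]

lemma ra_up {ε : ℝ} (hε : 0 < ε) (u k : ℝ) :
    ra ε (u + k) ≤ ra ε u + u / ra ε u * k + k ^ 2 / (2 * ε) := by
  have p1 := ra_pos hε u
  have p2 := ra_pos hε (u + k)
  have s1 := ra_sq ε u
  have s2 := ra_sq ε (u + k)
  have p3 := ra_ge hε u
  have h1 : ra ε (u + k) ≤ ra ε u + u / ra ε u * k + k ^ 2 / (2 * ra ε u) := by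
    have e : ra ε u + u / ra ε u * k + k ^ 2 / (2 * ra ε u)
      = (2 * ra ε u ^ 2 + 2 * u * k + k ^ 2) / (2 * ra ε u) := by field_simp
    rw [e, le_div_iff₀ (by positivity)]
    nlinarith [sq_nonneg (ra ε (u + k) - ra ε u)]
  have h2 : k ^ 2 / (2 * ra ε u) ≤ k ^ 2 / (2 * ε) := by gcongr
  linarith

lemma ra_slope {ε : ℝ} (hε : 0 < ε) (u : ℝ) : |u / ra ε u| ≤ 1 := by
  rw [abs_div, abs_of_pos (ra_pos hε u), div_le_one (ra_pos hε u)]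
  exact ra_ge_abs hε u

lemma ra_lip {ε : ℝ} (hε : 0 < ε) (u k : ℝ) : |ra ε (u + k) - ra ε u| ≤ |k| := by
  have h1 := ra_low hε u k
  have h2 := ra_low hε (u + k) (-k)
  rw [add_neg_cancel_right] at h2
  have h3 : |u / ra ε u * k| ≤ |k| := by
    rw [abs_mul]; nlinarith [ra_slope hε u, abs_nonneg k]
  have h4 : |(u + k) / ra ε (u + k) * (-k)| ≤ |k| := by
    rw [abs_mul, abs_neg]; nlinarith [ra_slope hε (u + k), abs_nonneg k]
  rw [abs_le] at *
  constructor <;> linarith [h3.1, h3.2, h4.1, h4.2]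

lemma ra_smooth {ε : ℝ} (hε : 0 < ε) : ContDiff ℝ 2 (ra ε) := by
  unfold ra
  apply ContDiff.sqrt
  · fun_prop
  · intro x; positivity

def rs (ε : ℝ) (v : ℝ × ℝ) : ℝ := (ra ε (v.1 + v.2) + ra ε (v.1 - v.2)) / 2

def rl (ε : ℝ) (v : ℝ × ℝ) : (ℝ × ℝ) →L[ℝ] ℝ :=
  ((v.1 + v.2) / ra ε (v.1 + v.2) / 2) •
    (ContinuousLinearMap.fst ℝ ℝ ℝ + ContinuousLinearMap.snd ℝ ℝ ℝ) +
  ((v.1 - v.2) / ra ε (v.1 - v.2) / 2) •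
    (ContinuousLinearMap.fst ℝ ℝ ℝ - ContinuousLinearMap.snd ℝ ℝ ℝ)

lemma rl_apply (ε : ℝ) (v k : ℝ × ℝ) : rl ε v k =
    ((v.1 + v.2) / ra ε (v.1 + v.2) * (k.1 + k.2)
      + (v.1 - v.2) / ra ε (v.1 - v.2) * (k.1 - k.2)) / 2 := by
  simp [rl]; ring

lemma rs_low {ε : ℝ} (hε : 0 < ε) (v k : ℝ × ℝ) : rs ε v + rl ε v k ≤ rs ε (v + k) := by
  have h1 := ra_low hε (v.1 + v.2) (k.1 + k.2)
  have h2 := ra_low hε (v.1 - v.2) (k.1 - k.2)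
  have e1 : (v + k).1 + (v + k).2 = v.1 + v.2 + (k.1 + k.2) := by simp; ring
  have e2 : (v + k).1 - (v + k).2 = v.1 - v.2 + (k.1 - k.2) := by simp; ring
  rw [rl_apply]; unfold rs
  rw [e1, e2]; linarith

lemma rs_up {ε : ℝ} (hε : 0 < ε) (v k : ℝ × ℝ) :
    rs ε (v + k) ≤ rs ε v + rl ε v k + QF k / (2 * ε) := by
  have h1 := ra_up hε (v.1 + v.2) (k.1 + k.2)
  have h2 := ra_up hε (v.1 - v.2) (k.1 - k.2)
  have e1 : (v + k).1 + (v + k).2 = v.1 + v.2 + (k.1 + k.2) := by simp; ring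
  have e2 : (v + k).1 - (v + k).2 = v.1 - v.2 + (k.1 - k.2) := by simp; ring
  have e3 : QF k / (2 * ε) = ((k.1 + k.2) ^ 2 / (2 * ε) + (k.1 - k.2) ^ 2 / (2 * ε)) / 2 := by
    unfold QF; field_simp; ring
  rw [rl_apply, e3]; unfold rs
  rw [e1, e2]; linarith

lemma rs_lip {ε : ℝ} (hε : 0 < ε) (v k : ℝ × ℝ) : (rs ε (v + k) - rs ε v) ^ 2 ≤ QF k := by
  have h1 := ra_lip hε (v.1 + v.2) (k.1 + k.2)
  have h2 := ra_lip hε (v.1 - v.2) (k.1 - k.2)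
  have e1 : (v + k).1 + (v + k).2 = v.1 + v.2 + (k.1 + k.2) := by simp; ring
  have e2 : (v + k).1 - (v + k).2 = v.1 - v.2 + (k.1 - k.2) := by simp; ring
  have h1 := sq_le_sq.2 h1
  have h2 := sq_le_sq.2 h2
  unfold rs QF
  rw [e1, e2]
  set A := ra ε (v.1 + v.2 + (k.1 + k.2)) - ra ε (v.1 + v.2) with hA
  set B := ra ε (v.1 - v.2 + (k.1 - k.2)) - ra ε (v.1 - v.2) with hB
  have : (ra ε (v.1 + v.2 + (k.1 + k.2)) + ra ε (v.1 - v.2 + (k.1 - k.2))) / 2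
    - (ra ε (v.1 + v.2) + ra ε (v.1 - v.2)) / 2 = (A + B) / 2 := by rw [hA, hB]; ring
  rw [this]
  nlinarith [sq_nonneg (A - B)]

lemma rs_smooth {ε : ℝ} (hε : 0 < ε) : ContDiff ℝ 2 (rs ε) := by
  unfold rs
  have h := ra_smooth hε
  have h1 : ContDiff ℝ 2 (fun v : ℝ × ℝ => v.1 + v.2) := by fun_prop
  have h2 : ContDiff ℝ 2 (fun v : ℝ × ℝ => v.1 - v.2) := by fun_prop
  exact ((h.comp h1).add (h.comp h2)).div_const 2

lemma rs_pos {ε : ℝ} (hε : 0 < ε) (v : ℝ × ℝ) : 0 < rs ε v := by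
  have := ra_pos hε (v.1 + v.2)
  have := ra_pos hε (v.1 - v.2)
  unfold rs; linarith

lemma norm_eq_half (v : ℝ × ℝ) : ‖v‖ = (|v.1 + v.2| + |v.1 - v.2|) / 2 := by
  rw [Prod.norm_def, Real.norm_eq_abs, Real.norm_eq_abs]
  rcases max_cases |v.1| |v.2| with ⟨h, h'⟩ | ⟨h, h'⟩ <;> rw [h] <;>
  rcases abs_cases v.1 with ⟨a, a'⟩ | ⟨a, a'⟩ <;> rcases abs_cases v.2 with ⟨b, b'⟩ | ⟨b, b'⟩ <;>
  rcases abs_cases (v.1 + v.2) with ⟨c, c'⟩ | ⟨c, c'⟩ <;>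
  rcases abs_cases (v.1 - v.2) with ⟨d, d'⟩ | ⟨d, d'⟩ <;> rw [a, b] at h' <;> linarith

lemma rs_ge {ε : ℝ} (hε : 0 < ε) (v : ℝ × ℝ) : ‖v‖ ≤ rs ε v := by
  have := ra_ge_abs hε (v.1 + v.2)
  have := ra_ge_abs hε (v.1 - v.2)
  rw [norm_eq_half]; unfold rs; linarith

lemma rs_le {ε : ℝ} (hε : 0 < ε) (v : ℝ × ℝ) : rs ε v ≤ ‖v‖ + ε := by
  have := ra_le hε (v.1 + v.2)
  have := ra_le hε (v.1 - v.2)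
  rw [norm_eq_half]; unfold rs; linarith

def nh (ε n : ℝ) (v : ℝ × ℝ) : ℝ := 2 * n * ra n (rs ε v) - 2 * n ^ 2 + ε * QF v

lemma nh_nice {ε n : ℝ} (hε : 0 < ε) (hn : 0 < n) : NiceCost (nh ε n) ε (n / ε + 1 + ε) := by
  let p : ℝ × ℝ → (ℝ × ℝ) →L[ℝ] ℝ := fun v =>
    (2 * n * (rs ε v / ra n (rs ε v))) • rl ε v + ε • DQL v
  have hl : ∀ v k, nh ε n v + p v k + ε * QF k ≤ nh ε n (v + k) := by
    intro v k
    have h1 := ra_low hn (rs ε v) (rs ε (v + k) - rs ε v)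
    rw [add_sub_cancel] at h1
    have h2 := rs_low hε v k
    have hB : 0 ≤ rs ε v / ra n (rs ε v) := div_nonneg (rs_pos hε v).le (ra_pos hn _).le
    set B := rs ε v / ra n (rs ε v)
    have h3 : ra n (rs ε v) + B * rl ε v k ≤ ra n (rs ε (v + k)) := by nlinarith
    have h4 := mul_le_mul_of_nonneg_left h3 (by positivity : 0 ≤ 2 * n)
    have : p v k = 2 * n * B * rl ε v k + ε * DQL v k := by simp [p, B]
    rw [this]; unfold nh; rw [QF_add]; linarith
  have hu : ∀ v k, nh ε n (v + k) ≤ nh ε n v + p v k + (n / ε + 1 + ε) * QF k := by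
    intro v k
    have h1 := ra_up hn (rs ε v) (rs ε (v + k) - rs ε v)
    rw [add_sub_cancel] at h1
    have h2 := rs_up hε v k
    have hq := rs_lip hε v k
    have hB : 0 ≤ rs ε v / ra n (rs ε v) := div_nonneg (rs_pos hε v).le (ra_pos hn _).le
    have hB1 : rs ε v / ra n (rs ε v) ≤ 1 := (abs_le.1 (ra_slope hn _)).2
    set B := rs ε v / ra n (rs ε v)
    have h3 : ra n (rs ε (v + k)) ≤ ra n (rs ε v) + B * rl ε v k + QF k / (2 * ε) + QF k / (2 * n) := by
      have : (rs ε (v + k) - rs ε v) ^ 2 / (2 * n) ≤ QF k / (2 * n) := by gcongr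
      have h5 : 0 ≤ QF k / (2 * ε) := div_nonneg (QF_nonneg k) (by positivity)
      nlinarith
    have h4 := mul_le_mul_of_nonneg_left h3 (by positivity : 0 ≤ 2 * n)
    have e4 : 2 * n * (ra n (rs ε v) + B * rl ε v k + QF k / (2 * ε) + QF k / (2 * n))
      = 2 * n * ra n (rs ε v) + 2 * n * B * rl ε v k + (n / ε) * QF k + QF k := by field_simp
    rw [e4] at h4
    have : p v k = 2 * n * B * rl ε v k + ε * DQL v k := by simp [p, B]
    rw [this]; unfold nh; rw [QF_add]; linarith
  have hp : ∀ v, fderiv ℝ (nh ε n) v = p v := fun v =>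
    (hasFDerivAt_of_quad (fun k => by
      have := hl v k; have := mul_nonneg hε.le (QF_nonneg k); linarith) (hu v)).fderiv
  refine ⟨hε, ?_, fun v k => by rw [hp]; exact hl v k, fun v k => by rw [hp]; exact hu v k⟩
  have h1 := (ra_smooth hn).comp (rs_smooth hε)
  have h2 : ContDiff ℝ 2 QF := by unfold QF; fun_prop
  exact ((contDiff_const.mul h1).sub contDiff_const).add (contDiff_const.mul h2)

theorem exists_nice (R δ : ℝ) (hR : 0 ≤ R) (hδ : 0 < δ) : ∃ h m K, NiceCost h m K ∧
    ∀ v, ‖v‖ ≤ R → |h v - ‖v‖ ^ 2| ≤ δ := by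
  let D := 2 * R + 1 + 2 * R ^ 2
  have hD : 0 < D := by positivity
  obtain ⟨ε, hε, hε1, hεD⟩ : ∃ ε > 0, ε ≤ 1 ∧ ε * D ≤ δ := by
    refine ⟨min 1 (δ / D), by positivity, min_le_left _ _, ?_⟩
    calc min 1 (δ / D) * D ≤ δ / D * D := by gcongr; exact min_le_right _ _
      _ = δ := by field_simp
  let n := (R + 1) ^ 2 * (1 + 1 / δ)
  have hn : 0 < n := by positivity
  refine ⟨_, _, _, nh_nice hε hn, fun v hv => ?_⟩
  have s1 := rs_ge hε v
  have s2 := rs_le hε v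
  have s0 := rs_pos hε v
  have v0 := norm_nonneg v
  have q1 := QF_le v
  have q0 := QF_nonneg v
  have rsq := ra_sq n (rs ε v)
  have rge := ra_ge hn (rs ε v)
  unfold nh
  set s := rs ε v
  set a := ra n s
  have f1 : 2 * n * a - 2 * n ^ 2 = s ^ 2 - (a - n) ^ 2 := by linarith [rsq]
  have f2 : (a - n) * (2 * n) ≤ s ^ 2 := by nlinarith
  have f3 : s ^ 2 ≤ (R + 1) ^ 2 := by nlinarith
  have f4 : (a - n) ^ 2 ≤ δ := by
    have g1 : (a - n) * (1 + 1 / δ) ≤ 1 := by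
      have : (a - n) * (1 + 1 / δ) * (R + 1) ^ 2 ≤ 1 * (R + 1) ^ 2 := by
        have : (a - n) * n ≤ s ^ 2 := by nlinarith
        calc _ = (a - n) * n := by simp only [n]; ring
          _ ≤ _ := by linarith
      exact le_of_mul_le_mul_right this (by positivity)
    have g2 : (a - n) * (1 / δ) ≤ 1 := by nlinarith
    have g3 : a - n ≤ 1 := by
      have : 0 ≤ (a - n) * (1 / δ) := mul_nonneg (by linarith) (by positivity)
      linarith
    have g4 : a - n ≤ δ := by
      rw [mul_one_div, div_le_one hδ] at g2; exact g2
    nlinarith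
  have f5 : s ^ 2 - ‖v‖ ^ 2 ≤ ε * (2 * R + 1) := by nlinarith
  have f6 : ε * QF v ≤ ε * (2 * R ^ 2) := by
    apply mul_le_mul_of_nonneg_left _ hε.le; nlinarith
  have f7 : 0 ≤ s ^ 2 - ‖v‖ ^ 2 := by nlinarith
  have f8 := mul_nonneg hε.le q0
  rw [f1, abs_le]
  have hDD : ε * D = ε * (2 * R + 1) + ε * (2 * R ^ 2) := by simp only [D]; ring
  constructor
  · linarith
  · linarith [sq_nonneg (a - n)]

abbrev EE := ℝ × ℝ

def JacF (F : EE → EE) (z : EE) : ℝ≥0∞ := ENNReal.ofReal |(fderiv ℝ F z).det|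

lemma JacF_meas (F : EE → EE) : Measurable (JacF F) :=
  ((ContinuousLinearMap.continuous_det.measurable.comp (measurable_fderiv ℝ F)).abs).ennreal_ofReal

lemma null_image {F : EE → EE} {C : NNReal} (hF : LipschitzWith C F) {s : Set EE}
    (hs : volume s = 0) : volume (F '' s) = 0 := by
  rw [← hausdorffMeasure_prod_real] at hs ⊢
  have := hF.hausdorffMeasure_image_le (d := 2) (by norm_num) s
  rw [hs, mul_zero] at this
  exact le_antisymm this bot_le

lemma image_le {F : EE → EE} {C : NNReal} (hF : LipschitzWith C F) {s : Set EE}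
    (hs : MeasurableSet s) : volume (F '' s) ≤ ∫⁻ z in s, JacF F z := by
  let Df := {z | DifferentiableAt ℝ F z}
  have hDf : MeasurableSet Df := measurableSet_of_differentiableAt ℝ F
  have hn : volume Dfᶜ = 0 := hF.ae_differentiableAt
  have h1 : F '' s ⊆ F '' (s ∩ Df) ∪ F '' Dfᶜ := by
    rw [← Set.image_union]
    apply Set.image_mono
    intro z hz
    by_cases h : z ∈ Df
    · exact Or.inl ⟨hz, h⟩
    · exact Or.inr h
  calc volume (F '' s) ≤ volume (F '' (s ∩ Df)) + volume (F '' Dfᶜ) :=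
        (measure_mono h1).trans (measure_union_le _ _)
    _ = volume (F '' (s ∩ Df)) := by rw [null_image hF hn, add_zero]
    _ ≤ ∫⁻ z in s ∩ Df, JacF F z :=
        addHaar_image_le_lintegral_abs_det_fderiv volume (hs.inter hDf)
          (fun x hx => (hx.2.hasFDerivAt).hasFDerivWithinAt)
    _ ≤ _ := lintegral_mono_set Set.inter_subset_left

lemma lint_image_le {F : EE → EE} {C : NNReal} (hF : LipschitzWith C F) {s : Set EE}
    (hs : MeasurableSet s) {ρ : EE → ℝ≥0∞} (hρ : Measurable ρ) :
    ∫⁻ y in F '' s, ρ y ≤ ∫⁻ z in s, JacF F z * ρ (F z) := by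
  have hFm := hF.continuous.measurable
  have h1 : volume.restrict (F '' s) ≤ ((volume.withDensity (JacF F)).restrict s).map F := by
    refine Measure.le_iff.2 fun B hB => ?_
    rw [Measure.restrict_apply hB, Measure.map_apply hFm hB, Measure.restrict_apply (hFm hB),
      withDensity_apply _ ((hFm hB).inter hs)]
    refine le_trans (measure_mono ?_) (image_le hF ((hFm hB).inter hs))
    rintro _ ⟨hb, z, hz, rfl⟩
    exact ⟨z, ⟨hb, hz⟩, rfl⟩
  calc ∫⁻ y in F '' s, ρ y ≤ ∫⁻ y, ρ y ∂(((volume.withDensity (JacF F)).restrict s).map F) :=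
        lintegral_mono' h1 le_rfl
    _ = ∫⁻ z in s, ρ (F z) ∂(volume.withDensity (JacF F)) := lintegral_map hρ hFm
    _ = _ := by
        exact setLIntegral_withDensity_eq_setLIntegral_mul _ (JacF_meas F) (hρ.comp hFm) hs

lemma side {F : EE → EE} {C : NNReal} (hF : LipschitzWith C F) (ν : Measure EE)
    [IsFiniteMeasure ν] {b : ℝ} (hb0 : 0 < b) (hb1 : b < 1) :
    ∃ D : Set EE, MeasurableSet D ∧
      (∀ᵐ z, z ∈ D → ν.rnDeriv volume z ≤ JacF F z * (ν.map F).rnDeriv volume (F z)) ∧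
      ∫⁻ z, (ν.map F).rnDeriv volume z ^ (1 - b) =
        ∫⁻ z, D.indicator (fun z => (ν.map F).rnDeriv volume (F z) ^ (-b) * ν.rnDeriv volume z) z := by
  have hFm := hF.continuous.measurable
  set μ := ν.map F with hμ
  have hfin : IsFiniteMeasure μ := Measure.isFiniteMeasure_map ν F
  set ρ := μ.rnDeriv volume with hρd
  have hρ : Measurable ρ := Measure.measurable_rnDeriv _ _
  set σ := ν.rnDeriv volume with hσd
  have hσ : Measurable σ := Measure.measurable_rnDeriv _ _
  have hs := Measure.mutuallySingular_singularPart μ volume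
  set G := hs.nullSet with hG
  have hGm : MeasurableSet G := hs.measurableSet_nullSet
  have hG1 : μ.singularPart volume G = 0 := hs.measure_nullSet
  have hG2 : volume Gᶜ = 0 := hs.measure_compl_nullSet
  have hμG : μ.restrict G = (volume.withDensity ρ).restrict G := by
    conv_lhs => rw [← Measure.singularPart_add_rnDeriv μ volume]
    rw [Measure.restrict_add, Measure.restrict_eq_zero.2 hG1, zero_add]
  set D := F ⁻¹' G with hD
  have hDm : MeasurableSet D := hFm hGm
  have hc : ∀ A, IsCompact A → A ⊆ D → ν A ≤ ∫⁻ z in A, JacF F z * ρ (F z) := by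
    intro A hA hAD
    have hFA : MeasurableSet (F '' A) := (hA.image hF.continuous).measurableSet
    have hFG : F '' A ⊆ G := Set.image_subset_iff.2 hAD
    calc ν A ≤ ν (F ⁻¹' (F '' A)) := measure_mono (Set.subset_preimage_image _ _)
      _ = μ (F '' A) := (Measure.map_apply hFm hFA).symm
      _ = μ.restrict G (F '' A) := by
          rw [Measure.restrict_apply hFA, Set.inter_eq_left.2 hFG]
      _ = ∫⁻ y in F '' A, ρ y := by
          rw [hμG, Measure.restrict_apply hFA, Set.inter_eq_left.2 hFG, withDensity_apply _ hFA]
      _ ≤ _ := lint_image_le hF hA.measurableSet hρ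
  have hm : ∀ A, MeasurableSet A → A ⊆ D → ν A ≤ ∫⁻ z in A, JacF F z * ρ (F z) := by
    intro A hA hAD
    rw [hA.measure_eq_iSup_isCompact]
    refine iSup_le fun K => iSup_le fun hK => iSup_le fun hKc => ?_
    exact (hc K hKc (hK.trans hAD)).trans (lintegral_mono_set hK)
  have hac : ν.restrict D ≪ volume := by
    refine Measure.AbsolutelyContinuous.mk fun A hA h0 => ?_
    rw [Measure.restrict_apply hA]
    refine le_antisymm ((hm _ (hA.inter hDm) Set.inter_subset_right).trans ?_) bot_le
    rw [Measure.restrict_eq_zero.2 (measure_mono_null Set.inter_subset_left h0)]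
    simp
  have hres : ν.restrict D = volume.withDensity (D.indicator σ) := by
    rw [← Measure.withDensity_rnDeriv_eq _ _ hac]
    exact withDensity_congr_ae (Measure.rnDeriv_restrict ν volume hDm)
  refine ⟨D, hDm, ?_, ?_⟩
  · rw [← ae_restrict_iff' hDm]
    refine ae_le_of_forall_setLIntegral_le_of_sigmaFinite hσ fun A hA _ => ?_
    rw [Measure.restrict_restrict hA]
    exact (Measure.setLIntegral_rnDeriv_le _).trans
      (hm _ (hA.inter hDm) Set.inter_subset_right)
  · have hρlt : ∀ᵐ z, ρ z < ∞ := Measure.rnDeriv_lt_top μ volume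
    have hpm : Measurable (fun z => ρ z ^ (-b)) := hρ.pow_const _
    calc ∫⁻ z, ρ z ^ (1 - b) = ∫⁻ z in G, ρ z ^ (1 - b) := by
          rw [← lintegral_add_compl _ hGm, Measure.restrict_eq_zero.2 hG2]; simp
      _ = ∫⁻ z in G, (ρ * fun z => ρ z ^ (-b)) z := by
          refine lintegral_congr_ae (ae_restrict_of_ae ?_)
          filter_upwards [hρlt] with z hz
          simp only [Pi.mul_apply]
          by_cases h0 : ρ z = 0
          · rw [h0, ENNReal.zero_rpow_of_pos (by linarith), zero_mul]
          · rw [sub_eq_add_neg, ENNReal.rpow_add _ _ h0 hz.ne, ENNReal.rpow_one]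
      _ = ∫⁻ z in G, ρ z ^ (-b) ∂(volume.withDensity ρ) :=
          (setLIntegral_withDensity_eq_setLIntegral_mul _ hρ hpm hGm).symm
      _ = ∫⁻ z in G, ρ z ^ (-b) ∂μ := by rw [hμG]
      _ = ∫⁻ z in D, ρ (F z) ^ (-b) ∂ν := by
          rw [hμ, setLIntegral_map hGm hpm hFm]
      _ = ∫⁻ z, (D.indicator σ * fun z => ρ (F z) ^ (-b)) z := by
          rw [hres]
          exact lintegral_withDensity_eq_lintegral_mul _ (hσ.indicator hDm) (hpm.comp hFm)
      _ = _ := by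
          refine lintegral_congr fun z => ?_
          by_cases hz : z ∈ D <;> simp [hz, mul_comm]

lemma pt_one {σ ρ J : ℝ≥0∞} {b : ℝ} (hb0 : 0 < b) (hσ0 : σ ≠ 0) (hσ : σ ≠ ∞)
    (h : σ ≤ J * ρ) : ρ ^ (-b) * σ ≤ J ^ b * σ ^ (1 - b) := by
  by_cases h1 : ρ = ∞
  · rw [h1, ENNReal.top_rpow_of_neg (by linarith), zero_mul]; exact bot_le
  have h0 : ρ ≠ 0 := by
    rintro rfl
    rw [mul_zero] at h; exact hσ0 (le_antisymm h bot_le)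
  have e : σ = σ ^ b * σ ^ (1 - b) := by
    rw [← ENNReal.rpow_add _ _ hσ0 hσ]; simp
  have e2 : σ ^ b ≤ J ^ b * ρ ^ b := by
    rw [← ENNReal.mul_rpow_of_nonneg _ _ hb0.le]
    exact ENNReal.rpow_le_rpow h hb0.le
  calc ρ ^ (-b) * σ = ρ ^ (-b) * (σ ^ b * σ ^ (1 - b)) := by rw [← e]
    _ ≤ ρ ^ (-b) * (J ^ b * ρ ^ b * σ ^ (1 - b)) := by gcongr
    _ = (ρ ^ (-b) * ρ ^ b) * (J ^ b * σ ^ (1 - b)) := by ring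
    _ = J ^ b * σ ^ (1 - b) := by
        rw [← ENNReal.rpow_add _ _ h0 h1]; simp

lemma jac_pow {t b x y : ℝ} (ht0 : 0 < t) (ht1 : t < 1) (hb0 : 0 < b) (hb : b ≤ 1 / 2)
    (hx : 0 ≤ x) (hy : 0 ≤ y) (h : (1 - t) * √x + t * √y ≤ 1) :
    ENNReal.ofReal (1 - t) * ENNReal.ofReal x ^ b + ENNReal.ofReal t * ENNReal.ofReal y ^ b ≤ 1 := by
  have key : (1 - t) * x ^ b + t * y ^ b ≤ 1 := by
    have c := (Real.concaveOn_rpow (p := 2 * b) (by linarith) (by linarith)).2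
      (Real.sqrt_nonneg x) (Real.sqrt_nonneg y) (by linarith : 0 ≤ 1 - t) ht0.le (by ring)
    have e : ∀ u : ℝ, 0 ≤ u → (√u) ^ (2 * b) = u ^ b := fun u hu => by
      rw [Real.sqrt_eq_rpow, ← Real.rpow_mul hu]; congr 1; ring
    simp only [smul_eq_mul, e x hx, e y hy] at c
    refine c.trans (Real.rpow_le_one (by
      have := Real.sqrt_nonneg x; have := Real.sqrt_nonneg y
      have : 0 ≤ 1 - t := by linarith
      positivity) h (by linarith))
  rw [ENNReal.ofReal_rpow_of_nonneg hx hb0.le, ENNReal.ofReal_rpow_of_nonneg hy hb0.le,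
    ← ENNReal.ofReal_mul (by linarith), ← ENNReal.ofReal_mul ht0.le, ← ENNReal.ofReal_add
      (mul_nonneg (by linarith) (Real.rpow_nonneg hx _)) (mul_nonneg (by linarith) (Real.rpow_nonneg hy _))]
  exact ENNReal.ofReal_le_one.2 key

def JE (b : ℝ) (ν : Measure EE) : ℝ≥0∞ := ∫⁻ z, ν.rnDeriv volume z ^ (1 - b)

def ev (t : ℝ) (p : EE × EE) : EE := (1 - t) • p.1 + t • p.2

lemma ev_cont (t : ℝ) : Continuous (ev t) := by unfold ev; fun_prop

theorem ent_fixed {h : EE → ℝ} {m K t : ℝ} (hn : NiceCost h m K) (ht0 : 0 < t) (ht1 : t < 1)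
    {π : Measure (EE × EE)} [IsProbabilityMeasure π] {Γ : Set (EE × EE)} {φ ψ : EE → ℝ}
    (hae : ∀ᵐ p ∂π, p ∈ Γ)
    (hle : ∀ p ∈ Γ, ∀ q ∈ Γ, φ p.1 + ψ q.2 ≤ h (q.2 - p.1))
    (heq : ∀ p ∈ Γ, φ p.1 + ψ p.2 = h (p.2 - p.1)) {b : ℝ} (hb0 : 0 < b) (hb : b ≤ 1 / 2) :
    ENNReal.ofReal (1 - t) * JE b (π.map Prod.fst) + ENNReal.ofReal t * JE b (π.map Prod.snd) ≤
      JE b (π.map (ev t)) := by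
  have hne : Γ.Nonempty := hae.exists
  obtain ⟨V, C, hV, hVΓ, hJ⟩ := geom hn ht0 ht1 hne hle heq
  set ν := π.map (ev t) with hν
  have hevm : Measurable (ev t) := (ev_cont t).measurable
  have : IsProbabilityMeasure ν := Measure.isProbabilityMeasure_map hevm.aemeasurable
  let F0 : EE → EE := fun z => z - t • V z
  let F1 : EE → EE := fun z => z + (1 - t) • V z
  have hF0 : LipschitzWith (1 + ‖t‖₊ * C) F0 := LipschitzWith.id.sub ((lipschitzWith_smul t).comp hV)
  have hF1 : LipschitzWith (1 + ‖1 - t‖₊ * C) F1 :=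
    LipschitzWith.id.add ((lipschitzWith_smul (1 - t)).comp hV)
  have m0 : ν.map F0 = π.map Prod.fst := by
    rw [hν, Measure.map_map hF0.continuous.measurable hevm]
    refine Measure.map_congr ?_
    filter_upwards [hae] with p hp
    simp only [Function.comp, F0, ev, hVΓ p hp]
    module
  have m1 : ν.map F1 = π.map Prod.snd := by
    rw [hν, Measure.map_map hF1.continuous.measurable hevm]
    refine Measure.map_congr ?_
    filter_upwards [hae] with p hp
    simp only [Function.comp, F1, ev, hVΓ p hp]
    module
  obtain ⟨D0, hD0, h01, h02⟩ := side hF0 ν hb0 (by linarith)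
  obtain ⟨D1, hD1, h11, h12⟩ := side hF1 ν hb0 (by linarith)
  rw [m0] at h01 h02
  rw [m1] at h11 h12
  have hVd : ∀ᵐ z, DifferentiableAt ℝ V z := hV.ae_differentiableAt
  let A0 : EE → (EE →L[ℝ] EE) := fun z => ContinuousLinearMap.id ℝ EE - t • fderiv ℝ V z
  let A1 : EE → (EE →L[ℝ] EE) := fun z => ContinuousLinearMap.id ℝ EE + (1 - t) • fderiv ℝ V z
  let S : Set EE := {z | (1 - t) * √|(A0 z).det| + t * √|(A1 z).det| ≤ 1}
  have hA0m : Measurable A0 := (measurable_fderiv ℝ V).const_smul t |>.const_sub _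
  have hA1m : Measurable A1 := (measurable_fderiv ℝ V).const_smul (1 - t) |>.const_add _
  have hSm : MeasurableSet S := by
    have d0 := (ContinuousLinearMap.continuous_det.measurable.comp hA0m).abs.sqrt
    have d1 := (ContinuousLinearMap.continuous_det.measurable.comp hA1m).abs.sqrt
    exact measurableSet_le ((d0.const_mul _).add (d1.const_mul _)) measurable_const
  let T : Set EE := {z | DifferentiableAt ℝ V z} ∩ Sᶜ
  have hTm : MeasurableSet T := (measurableSet_of_differentiableAt ℝ V).inter hSm.compl
  have hνT : ν T = 0 := by
    rw [hν, Measure.map_apply hevm hTm]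
    refine measure_mono_null ?_ hae
    intro p hp hpΓ
    exact hp.2 (hJ p hpΓ hp.1)
  have hσT : ∀ᵐ z, z ∈ T → ν.rnDeriv volume z = 0 := by
    rw [← ae_restrict_iff' hTm]
    have : ∫⁻ z in T, ν.rnDeriv volume z = 0 :=
      le_antisymm ((Measure.setLIntegral_rnDeriv_le T).trans hνT.le) bot_le
    exact (lintegral_eq_zero_iff (Measure.measurable_rnDeriv _ _)).1 this
  have hσlt : ∀ᵐ z, ν.rnDeriv volume z < ∞ := Measure.rnDeriv_lt_top ν volume
  have i0 : Measurable (D0.indicator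
      (fun z => (π.map Prod.fst).rnDeriv volume (F0 z) ^ (-b) * ν.rnDeriv volume z)) :=
    ((((Measure.measurable_rnDeriv (π.map Prod.fst) volume).comp hF0.continuous.measurable).pow_const
      (-b)).mul (Measure.measurable_rnDeriv ν volume)).indicator hD0
  have i1 : Measurable (D1.indicator
      (fun z => (π.map Prod.snd).rnDeriv volume (F1 z) ^ (-b) * ν.rnDeriv volume z)) :=
    ((((Measure.measurable_rnDeriv (π.map Prod.snd) volume).comp hF1.continuous.measurable).pow_const
      (-b)).mul (Measure.measurable_rnDeriv ν volume)).indicator hD1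
  unfold JE
  rw [h02, h12, ← lintegral_const_mul, ← lintegral_const_mul, ← lintegral_add_left]
  · refine lintegral_mono_ae ?_
    filter_upwards [h01, h11, hVd, hσT, hσlt] with z z0 z1 zV zT zlt
    by_cases hσ0 : ν.rnDeriv volume z = 0
    · have : ∀ (D : Set EE) (g : EE → ℝ≥0∞), D.indicator (fun z => g z * ν.rnDeriv volume z) z = 0 := by
        intro D g
        by_cases hz : z ∈ D <;> simp [hz, hσ0]
      rw [this, this]; simp
    have hzS : z ∈ S := by
      by_contra hc
      exact hσ0 (zT ⟨zV, hc⟩)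
    have f0 : fderiv ℝ F0 z = A0 z := by
      have := (hasFDerivAt_id z).sub (zV.hasFDerivAt.const_smul t)
      exact this.fderiv
    have f1 : fderiv ℝ F1 z = A1 z := by
      have := (hasFDerivAt_id z).add (zV.hasFDerivAt.const_smul (1 - t))
      exact this.fderiv
    have hj := jac_pow ht0 ht1 hb0 hb (abs_nonneg _) (abs_nonneg _) hzS
    have g0 : D0.indicator (fun z => (π.map Prod.fst).rnDeriv volume (F0 z) ^ (-b) * ν.rnDeriv volume z) z
        ≤ ENNReal.ofReal |(A0 z).det| ^ b * ν.rnDeriv volume z ^ (1 - b) := by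
      by_cases hz : z ∈ D0
      · rw [Set.indicator_of_mem hz]
        have := pt_one hb0 hσ0 zlt.ne (z0 hz)
        unfold JacF at this
        rwa [f0] at this
      · rw [Set.indicator_of_notMem hz]; exact bot_le
    have g1 : D1.indicator (fun z => (π.map Prod.snd).rnDeriv volume (F1 z) ^ (-b) * ν.rnDeriv volume z) z
        ≤ ENNReal.ofReal |(A1 z).det| ^ b * ν.rnDeriv volume z ^ (1 - b) := by
      by_cases hz : z ∈ D1
      · rw [Set.indicator_of_mem hz]
        have := pt_one hb0 hσ0 zlt.ne (z1 hz)
        unfold JacF at this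
        rwa [f1] at this
      · rw [Set.indicator_of_notMem hz]; exact bot_le
    calc _ ≤ ENNReal.ofReal (1 - t) * (ENNReal.ofReal |(A0 z).det| ^ b * ν.rnDeriv volume z ^ (1 - b))
          + ENNReal.ofReal t * (ENNReal.ofReal |(A1 z).det| ^ b * ν.rnDeriv volume z ^ (1 - b)) := by
          gcongr
      _ = (ENNReal.ofReal (1 - t) * ENNReal.ofReal |(A0 z).det| ^ b
          + ENNReal.ofReal t * ENNReal.ofReal |(A1 z).det| ^ b) * ν.rnDeriv volume z ^ (1 - b) := by ring
      _ ≤ 1 * ν.rnDeriv volume z ^ (1 - b) := by gcongr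
      _ = _ := one_mul _
  · exact i0.const_mul _
  · exact i1
  · exact i0

open Metric Filter Topology

def vb (r : ℝ) : ℝ≥0∞ := volume (closedBall (0 : EE) r)

lemma vb_eq (z : EE) (r : ℝ) : volume (closedBall z r) = vb r :=
  Measure.addHaar_closedBall_center volume z r

lemma vb_pos {r : ℝ} (hr : 0 < r) : vb r ≠ 0 := (measure_closedBall_pos volume _ hr).ne'
lemma vb_fin (r : ℝ) : vb r ≠ ∞ := measure_closedBall_lt_top.ne

lemma fub (m : Measure EE) [SFinite m] (r : ℝ) {g : EE → ℝ≥0∞} (hg : Measurable g) :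
    ∫⁻ z, ∫⁻ w in closedBall z r, g w ∂m = vb r * ∫⁻ w, g w ∂m := by
  let S : Set (EE × EE) := {p | dist p.2 p.1 ≤ r}
  have hS : MeasurableSet S := (isClosed_le (by fun_prop) continuous_const).measurableSet
  let G : EE → EE → ℝ≥0∞ := fun z w => S.indicator (fun p => g p.2) (z, w)
  have hG : Measurable (Function.uncurry G) := (hg.comp measurable_snd).indicator hS
  have e1 : ∀ z, ∫⁻ w in closedBall z r, g w ∂m = ∫⁻ w, G z w ∂m := by
    intro z
    rw [← lintegral_indicator isClosed_closedBall.measurableSet]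
    rfl
  have e2 : ∀ w, ∫⁻ z, G z w = vb r * g w := by
    intro w
    have : ∀ z, G z w = (closedBall w r).indicator (fun _ => g w) z := by
      intro z
      simp only [G, Set.indicator, S, Set.mem_ofPred_eq, mem_closedBall, dist_comm]
    simp_rw [this]
    rw [lintegral_indicator isClosed_closedBall.measurableSet, setLIntegral_const, vb_eq, mul_comm]
  simp_rw [e1]
  rw [lintegral_lintegral_swap hG.aemeasurable]
  simp_rw [e2]
  exact lintegral_const_mul _ hg

def av (ν : Measure EE) (r : ℝ) (z : EE) : ℝ≥0∞ := ν (closedBall z r) / vb r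

lemma av_meas (ν : Measure EE) [SFinite ν] (r : ℝ) : Measurable (av ν r) := by
  let S : Set (EE × EE) := {p | dist p.2 p.1 ≤ r}
  have hS : MeasurableSet S := (isClosed_le (by fun_prop) continuous_const).measurableSet
  exact (measurable_measure_prodMk_left hS).div_const _

lemma av_int (ν : Measure EE) [IsProbabilityMeasure ν] {r : ℝ} (hr : 0 < r) :
    ∫⁻ z, av ν r z = 1 := by
  have h := fub ν r (g := fun _ => 1) measurable_const
  simp only [lintegral_const, Measure.restrict_apply MeasurableSet.univ, Set.univ_inter, one_mul,
    measure_univ, mul_one] at h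
  unfold av
  simp_rw [div_eq_mul_inv]
  rw [lintegral_mul_const', h, ENNReal.mul_inv_cancel (vb_pos hr) (vb_fin r)]
  exact ENNReal.inv_ne_top.2 (vb_pos hr)

lemma JE_le_av (ν : Measure EE) [IsProbabilityMeasure ν] {r b : ℝ} (hr : 0 < r) (hb0 : 0 < b)
    (hb1 : b < 1) : JE b ν ≤ ∫⁻ z, av ν r z ^ (1 - b) := by
  have hσ : Measurable (ν.rnDeriv volume) := Measure.measurable_rnDeriv _ _
  have hJ : ∀ z, ∫⁻ w in closedBall z r, ν.rnDeriv volume w ^ (1 - b) ≤ vb r * av ν r z ^ (1 - b) := by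
    intro z
    have h := ENNReal.lintegral_mul_norm_pow_le (μ := volume.restrict (closedBall z r))
      (f := ν.rnDeriv volume) (g := fun _ => 1) hσ.aemeasurable aemeasurable_const
      (p := 1 - b) (q := b) (by linarith) hb0.le (by ring)
    simp only [ENNReal.one_rpow, mul_one, lintegral_const, Measure.restrict_apply MeasurableSet.univ,
      Set.univ_inter, one_mul, vb_eq] at h
    refine h.trans ?_
    have h1 : ∫⁻ w in closedBall z r, ν.rnDeriv volume w ≤ vb r * av ν r z := by
      unfold av
      rw [ENNReal.mul_div_cancel (vb_pos hr) (vb_fin r)]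
      exact Measure.setLIntegral_rnDeriv_le _
    calc _ ≤ (vb r * av ν r z) ^ (1 - b) * vb r ^ b := by
          gcongr
      _ = (vb r ^ (1 - b) * vb r ^ b) * av ν r z ^ (1 - b) := by
          rw [ENNReal.mul_rpow_of_nonneg _ _ (by linarith)]; ring
      _ = _ := by
          rw [← ENNReal.rpow_add _ _ (vb_pos hr) (vb_fin r)]; simp
  have h := fub volume r (hσ.pow_const (1 - b))
  have h2 : vb r * JE b ν ≤ vb r * ∫⁻ z, av ν r z ^ (1 - b) := by
    unfold JE
    rw [← h, ← lintegral_const_mul _ ((av_meas ν r).pow_const _)]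
    exact lintegral_mono hJ
  exact (ENNReal.mul_le_mul_iff_right (vb_pos hr) (vb_fin r)).1 h2

lemma av_bound (ν : Measure EE) [IsProbabilityMeasure ν] {R : ℝ}
    (hν : ν (closedBall 0 R)ᶜ = 0) {r b : ℝ} (hb1 : b < 1) (z : EE) :
    av ν r z ^ (1 - b) ≤ (closedBall (0 : EE) (R + r)).indicator (fun _ => (1 / vb r) ^ (1 - b)) z := by
  by_cases hz : z ∈ closedBall (0 : EE) (R + r)
  · rw [Set.indicator_of_mem hz]
    unfold av
    have h1 : ν (closedBall z r) ≤ 1 := prob_le_one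
    gcongr
  · rw [Set.indicator_of_notMem hz]
    have : ν (closedBall z r) = 0 := by
      refine measure_mono_null ?_ hν
      intro w hw hw'
      apply hz
      rw [mem_closedBall] at *
      linarith [dist_triangle z w 0, dist_comm z w]
    unfold av
    rw [this, ENNReal.zero_div, ENNReal.zero_rpow_of_pos (by linarith)]

lemma usc_av {νs : ℕ → ProbabilityMeasure EE} {ν : ProbabilityMeasure EE}
    (hlim : Tendsto νs atTop (𝓝 ν)) {R : ℝ} (hs : ∀ n, (νs n : Measure EE) (closedBall 0 R)ᶜ = 0)
    {b r : ℝ} (hr : 0 < r) (hb0 : 0 < b) (hb1 : b < 1) {c : ℝ≥0∞} (hc : ∀ n, c ≤ JE b (νs n)) :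
    c ≤ ∫⁻ z, av ν r z ^ (1 - b) := by
  have h1 : c ≤ limsup (fun n => ∫⁻ z, av (νs n : Measure EE) r z ^ (1 - b)) atTop :=
    le_limsup_of_le (by isBoundedDefault) fun a ha => by
      obtain ⟨n, hn⟩ := ha.exists
      exact ((hc n).trans (JE_le_av _ hr hb0 hb1)).trans hn
  refine h1.trans ((limsup_lintegral_le _ (fun n => (av_meas _ r).pow_const _)
    (fun n => ae_of_all _ (av_bound _ (hs n) hb1)) ?_).trans ?_)
  · rw [lintegral_indicator isClosed_closedBall.measurableSet, setLIntegral_const]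
    refine ENNReal.mul_ne_top ?_ measure_closedBall_lt_top.ne
    refine ENNReal.rpow_ne_top_of_nonneg (by linarith) ?_
    simp [vb_pos hr]
  · refine lintegral_mono fun z => ?_
    have hl := ProbabilityMeasure.limsup_measure_closed_le_of_tendsto hlim
      (isClosed_closedBall (x := z) (ε := r))
    let f : ℝ≥0∞ → ℝ≥0∞ := fun x => (x / vb r) ^ (1 - b)
    have hf : Monotone f := fun x y hxy => by
      simp only [f]; gcongr
    have hfc : Continuous f :=
      ENNReal.continuous_rpow_const.comp (ENNReal.continuous_div_const _ (vb_pos hr))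
    have := hf.map_limsup_of_continuousAt (F := atTop)
      (fun n => (νs n : Measure EE) (closedBall z r)) hfc.continuousAt
    change limsup (f ∘ _) atTop ≤ f _
    rw [← this]
    exact hf hl

lemma trunc_le {f T : ℝ≥0∞} {a : ℝ} (ha0 : 0 < a) (ha1 : a < 1) (hT0 : T ≠ 0) (hT : T ≠ ∞) :
    f ^ a ≤ min f T ^ a + T ^ (a - 1) * f := by
  rcases le_total f T with h | h
  · rw [min_eq_left h]; exact le_self_add
  · refine le_trans ?_ le_add_self
    by_cases hf : f = ∞
    · rw [hf, ENNReal.mul_top]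
      · exact le_top
      · simp [ENNReal.rpow_eq_zero_iff, hT0, hT]
    have hf0 : f ≠ 0 := fun h0 => hT0 (le_antisymm (h0 ▸ h) bot_le)
    calc f ^ a = f ^ (a - 1) * f := by
          conv_rhs => rw [← ENNReal.rpow_one f]
          rw [← ENNReal.rpow_mul, ← ENNReal.rpow_add _ _ hf0 hf]; simp
      _ ≤ _ := by
          gcongr ?_ * f
          have e : a - 1 = -(1 - a) := by ring
          rw [e, ENNReal.rpow_neg, ENNReal.rpow_neg]
          exact ENNReal.inv_le_inv.2 (ENNReal.rpow_le_rpow h (by linarith))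

lemma av_limit (ν : Measure EE) [IsProbabilityMeasure ν] {R : ℝ}
    (hν : ν (closedBall 0 R)ᶜ = 0) {b : ℝ} (hb0 : 0 < b) (hb1 : b < 1) {c : ℝ≥0∞}
    (hc : ∀ r > 0, c ≤ ∫⁻ z, av ν r z ^ (1 - b)) : c ≤ JE b ν := by
  have key : ∀ T : ℝ≥0∞, T ≠ 0 → T ≠ ∞ → c ≤ JE b ν + T ^ (-b) := by
    intro T hT0 hT
    let r : ℕ → ℝ := fun n => 1 / ((n : ℝ) + 1)
    have hr : ∀ n, 0 < r n := fun n => by positivity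
    have hr1 : ∀ n, r n ≤ 1 := fun n => by
      simp only [r]; rw [div_le_one (by positivity)]; linarith [Nat.cast_nonneg (α := ℝ) n]
    have hr0 : Tendsto r atTop (𝓝[>] 0) :=
      tendsto_nhdsWithin_iff.2 ⟨tendsto_one_div_add_atTop_nhds_zero_nat, Eventually.of_forall hr⟩
    have h1 : ∀ n, c ≤ (∫⁻ z, min (av ν (r n) z) T ^ (1 - b)) + T ^ (-b) := by
      intro n
      have hm := (((av_meas ν (r n)).min (measurable_const (a := T))).pow_const (1 - b))
      calc c ≤ ∫⁻ z, av ν (r n) z ^ (1 - b) := hc _ (hr n)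
        _ ≤ ∫⁻ z, (min (av ν (r n) z) T ^ (1 - b) + T ^ (-b) * av ν (r n) z) :=
            lintegral_mono fun z => by
              have := trunc_le (f := av ν (r n) z) (a := 1 - b) (by linarith) (by linarith) hT0 hT
              rwa [show 1 - b - 1 = -b by ring] at this
        _ = _ := by
            rw [lintegral_add_left hm, lintegral_const_mul _ (av_meas ν (r n)), av_int ν (hr n), mul_one]
    have h2 : Tendsto (fun n => ∫⁻ z, min (av ν (r n) z) T ^ (1 - b)) atTop
        (𝓝 (∫⁻ z, min (ν.rnDeriv volume z) T ^ (1 - b))) := by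
      refine tendsto_lintegral_of_dominated_convergence
        ((closedBall (0 : EE) (R + 1)).indicator (fun _ => T ^ (1 - b)))
        (fun n => (((av_meas ν (r n)).min (measurable_const (a := T))).pow_const (1 - b)))
        (fun n => ae_of_all _ fun z => ?_) ?_ ?_
      · by_cases hz : z ∈ closedBall (0 : EE) (R + 1)
        · rw [Set.indicator_of_mem hz]
          exact ENNReal.rpow_le_rpow (min_le_right _ _) (by linarith)
        · have h3 := av_bound ν hν (r := r n) hb1 z
          rw [Set.indicator_of_notMem (fun h => hz (closedBall_subset_closedBall
            (by linarith [hr1 n]) h))] at h3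
          exact ((ENNReal.rpow_le_rpow (min_le_left _ _) (by linarith)).trans h3).trans bot_le
      · rw [lintegral_indicator isClosed_closedBall.measurableSet, setLIntegral_const]
        exact ENNReal.mul_ne_top (ENNReal.rpow_ne_top_of_nonneg (by linarith) hT)
          measure_closedBall_lt_top.ne
      · filter_upwards [Besicovitch.ae_tendsto_rnDeriv ν volume] with z hz
        have h3 := hz.comp hr0
        have h4 : Tendsto (fun n => av ν (r n) z) atTop (𝓝 (ν.rnDeriv volume z)) := by
          refine h3.congr fun n => ?_
          simp only [Function.comp, av, vb_eq]
        exact (ENNReal.continuous_rpow_const.tendsto _).comp (h4.min tendsto_const_nhds)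
    have h3 : c ≤ (∫⁻ z, min (ν.rnDeriv volume z) T ^ (1 - b)) + T ^ (-b) :=
      ge_of_tendsto' (h2.add tendsto_const_nhds) h1
    refine h3.trans ?_
    gcongr
    unfold JE
    exact lintegral_mono fun z => ENNReal.rpow_le_rpow (min_le_left _ _) (by linarith)
  have hT : Tendsto (fun n : ℕ => JE b ν + ((n : ℝ≥0∞) + 1) ^ (-b)) atTop (𝓝 (JE b ν + 0)) := by
    refine tendsto_const_nhds.add ?_
    have e : (0 : ℝ≥0∞) = ∞ ^ (-b) := by rw [ENNReal.top_rpow_of_neg (by linarith)]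
    rw [e]
    refine (ENNReal.continuous_rpow_const.tendsto _).comp ?_
    refine tendsto_nhds_top_mono ENNReal.tendsto_nat_nhds_top (Eventually.of_forall fun n => ?_)
    exact le_self_add
  rw [add_zero] at hT
  refine ge_of_tendsto' hT fun n => key _ (by simp) ?_
  exact ENNReal.add_ne_top.2 ⟨ENNReal.natCast_ne_top n, ENNReal.one_ne_top⟩

theorem usc_JE {νs : ℕ → ProbabilityMeasure EE} {ν : ProbabilityMeasure EE}
    (hlim : Tendsto νs atTop (𝓝 ν)) {R : ℝ} (hs : ∀ n, (νs n : Measure EE) (closedBall 0 R)ᶜ = 0)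
    (hs' : (ν : Measure EE) (closedBall 0 R)ᶜ = 0)
    {b : ℝ} (hb0 : 0 < b) (hb1 : b < 1) {c : ℝ≥0∞} (hc : ∀ n, c ≤ JE b (νs n)) :
    c ≤ JE b ν :=
  av_limit ν hs' hb0 hb1 fun _ hr => usc_av hlim hs hr hb0 hb1 hc

abbrev XB (R : ℝ) := ↥(closedBall (0 : EE) R)

instance (R : ℝ) : CompactSpace (XB R) := isCompact_iff_compactSpace.1 (isCompact_closedBall _ _)

def io (R : ℝ) : XB R × XB R → EE × EE := Prod.map Subtype.val Subtype.val

lemma io_cont (R : ℝ) : Continuous (io R) := by unfold io; fun_prop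

lemma val_emb (R : ℝ) : MeasurableEmbedding (Subtype.val : XB R → EE) :=
  MeasurableEmbedding.subtype_coe isClosed_closedBall.measurableSet

lemma io_emb (R : ℝ) : MeasurableEmbedding (io R) := (val_emb R).prodMap (val_emb R)

lemma pullback {α β : Type*} [MeasurableSpace α] [MeasurableSpace β] {f : α → β}
    (hf : MeasurableEmbedding f) (μ : Measure β) [IsProbabilityMeasure μ]
    (h : ∀ᵐ x ∂μ, x ∈ Set.range f) : ∃ μ' : Measure α, IsProbabilityMeasure μ' ∧ μ'.map f = μ := by
  refine ⟨μ.comap f, ?_, ?_⟩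
  · exact MeasureTheory.isProbabilityMeasure_comap hf.injective h (fun s hs => hf.measurableSet_image' hs)
  · rw [hf.map_comap]
    exact Measure.restrict_eq_self_of_ae_mem h

lemma map_inj {α β : Type*} [MeasurableSpace α] [MeasurableSpace β] {f : α → β}
    (hf : MeasurableEmbedding f) {μ ν : Measure α} (h : μ.map f = ν.map f) : μ = ν := by
  rw [← hf.comap_map μ, h, hf.comap_map]

lemma io_fst (R : ℝ) (π : Measure (XB R × XB R)) :
    (π.map (io R)).map Prod.fst = (π.map Prod.fst).map Subtype.val := by
  rw [Measure.map_map measurable_fst (io_cont R).measurable,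
    Measure.map_map measurable_subtype_coe measurable_fst]
  rfl

lemma io_snd (R : ℝ) (π : Measure (XB R × XB R)) :
    (π.map (io R)).map Prod.snd = (π.map Prod.snd).map Subtype.val := by
  rw [Measure.map_map measurable_snd (io_cont R).measurable,
    Measure.map_map measurable_subtype_coe measurable_snd]
  rfl

def csq (R : ℝ) : C(XB R × XB R, ℝ) := ⟨fun p => ‖p.2.1 - p.1.1‖ ^ 2, by fun_prop⟩

lemma cost_io (R : ℝ) (π : Measure (XB R × XB R)) [IsProbabilityMeasure π] :
    ∫⁻ p, edist p.1 p.2 ^ 2 ∂(π.map (io R)) = ENNReal.ofReal (∫ p, csq R p ∂π) := by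
  rw [lintegral_map (by fun_prop) (io_cont R).measurable,
    ofReal_integral_eq_lintegral_ofReal (cint2 π (csq R)) (ae_of_all _ fun p => by
      simp only [csq, ContinuousMap.coe_mk, Pi.zero_apply]; positivity)]
  refine lintegral_congr fun p => ?_
  simp only [csq, ContinuousMap.coe_mk, io, Prod.map]
  rw [edist_comm, edist_dist, dist_eq_norm, ENNReal.ofReal_pow (norm_nonneg _)]

lemma plan_fixed (R : ℝ) (hR : 0 ≤ R) (m0 m1 : Measure (XB R)) [IsProbabilityMeasure m0]
    [IsProbabilityMeasure m1] {δ : ℝ} (hδ : 0 < δ) :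
    ∃ π : Measure (XB R × XB R), IsProbabilityMeasure π ∧ π.map Prod.fst = m0 ∧ π.map Prod.snd = m1 ∧
    (∀ π' : Measure (XB R × XB R), IsProbabilityMeasure π' → π'.map Prod.fst = m0 →
      π'.map Prod.snd = m1 → ∫ p, csq R p ∂π ≤ ∫ p, csq R p ∂π' + 2 * δ) ∧
    ∀ t b : ℝ, 0 < t → t < 1 → 0 < b → b ≤ 1 / 2 →
      ENNReal.ofReal (1 - t) * JE b (m0.map Subtype.val) + ENNReal.ofReal t * JE b (m1.map Subtype.val)
        ≤ JE b ((π.map (io R)).map (ev t)) := by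
  obtain ⟨h, m, K, hn, happ⟩ := exists_nice (2 * R) δ (by linarith) hδ
  have hhc : Continuous h := hn.smooth.continuous
  let c : C(XB R × XB R, ℝ) := ⟨fun p => h (p.2.1 - p.1.1), by fun_prop⟩
  obtain ⟨π, hπ, h0, h1, hopt, Γ, φ, ψ, hΓ, hle, heq⟩ := kant m0 m1 c
  have hcc : ∀ p, |c p - csq R p| ≤ δ := by
    intro p
    refine happ _ ?_
    have a1 := mem_closedBall_zero_iff.1 p.1.2
    have a2 := mem_closedBall_zero_iff.1 p.2.2
    linarith [norm_sub_le p.2.1 p.1.1]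
  refine ⟨π, hπ, h0, h1, ?_, ?_⟩
  · intro π' hπ' h0' h1'
    have e1 := hopt π' hπ' h0' h1'
    have e2 : ∫ p, csq R p ∂π ≤ ∫ p, (c p + δ) ∂π :=
      integral_mono (cint2 _ _) ((cint2 _ _).add (integrable_const _)) fun p => by
        have := abs_le.1 (hcc p); simp only; linarith [this.1]
    have e3 : ∫ p, c p ∂π' ≤ ∫ p, (csq R p + δ) ∂π' :=
      integral_mono (cint2 _ _) ((cint2 _ _).add (integrable_const _)) fun p => by
        have := abs_le.1 (hcc p); simp only; linarith [this.2]
    rw [integral_add (cint2 _ _) (integrable_const _)] at e2 e3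
    simp at e2 e3
    linarith
  · intro t b ht0 ht1 hb0 hb
    have hP : IsProbabilityMeasure (π.map (io R)) :=
      Measure.isProbabilityMeasure_map (io_cont R).measurable.aemeasurable
    have hex : ∀ f : XB R → ℝ, ∃ g : EE → ℝ, ∀ x, g x.1 = f x := fun f =>
      ⟨fun z => if hz : z ∈ closedBall (0 : EE) R then f ⟨z, hz⟩ else 0, fun x => by
        simp⟩
    obtain ⟨φ', hφ⟩ := hex φ
    obtain ⟨ψ', hψ⟩ := hex ψ
    have key := ent_fixed hn ht0 ht1 (π := π.map (io R)) (Γ := io R '' Γ) (φ := φ') (ψ := ψ')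
      (by
        rw [(io_emb R).ae_map_iff]
        filter_upwards [hΓ] with p hp
        exact ⟨p, hp, rfl⟩)
      (by
        rintro _ ⟨p, hp, rfl⟩ _ ⟨q, hq, rfl⟩
        simp only [io, Prod.map, hφ, hψ]
        exact hle p hp q hq)
      (by
        rintro _ ⟨p, hp, rfl⟩
        simp only [io, Prod.map, hφ, hψ]
        exact heq p hp) hb0 hb
    rwa [io_fst, io_snd, h0, h1] at key

theorem limit_plan (μ0 μ1 : Measure EE) [IsProbabilityMeasure μ0] [IsProbabilityMeasure μ1]
    {R : ℝ} (hR : 0 ≤ R) (hs0 : ∀ᵐ z ∂μ0, z ∈ closedBall (0 : EE) R)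
    (hs1 : ∀ᵐ z ∂μ1, z ∈ closedBall (0 : EE) R) :
    ∃ P : Measure (EE × EE), IsProbabilityMeasure P ∧ P.map Prod.fst = μ0 ∧ P.map Prod.snd = μ1 ∧
      (∀ γ : Measure (EE × EE), IsProbabilityMeasure γ → γ.map Prod.fst = μ0 → γ.map Prod.snd = μ1 →
        ∫⁻ p, edist p.1 p.2 ^ 2 ∂P ≤ ∫⁻ p, edist p.1 p.2 ^ 2 ∂γ) ∧
      ∀ t b : ℝ, 0 < t → t < 1 → 0 < b → b ≤ 1 / 2 →
        ENNReal.ofReal (1 - t) * JE b μ0 + ENNReal.ofReal t * JE b μ1 ≤ JE b (P.map (ev t)) := by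
  obtain ⟨m0, hm0, e0⟩ := pullback (val_emb R) μ0 (by simpa using hs0)
  obtain ⟨m1, hm1, e1⟩ := pullback (val_emb R) μ1 (by simpa using hs1)
  choose πs hπ h0 h1 hopt hent using fun n : ℕ =>
    plan_fixed R hR m0 m1 (δ := 1 / ((n : ℝ) + 1)) (by positivity)
  let Ps : ℕ → ProbabilityMeasure (XB R × XB R) := fun n => ⟨πs n, hπ n⟩
  obtain ⟨Q, k, hk, hlim⟩ := CompactSpace.tendsto_subseq Ps
  have iom : AEMeasurable (io R) (Q : Measure (XB R × XB R)) := (io_cont R).measurable.aemeasurable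
  have hP : IsProbabilityMeasure ((Q : Measure (XB R × XB R)).map (io R)) :=
    Measure.isProbabilityMeasure_map iom
  have q0 : (Q : Measure (XB R × XB R)).map Prod.fst = m0 := by
    have := ProbabilityMeasure.tendsto_map_of_tendsto_of_continuous _ _ hlim continuous_fst
    have h2 : Q.map (f := Prod.fst) measurable_fst.aemeasurable = ⟨m0, hm0⟩ := by
      refine tendsto_nhds_unique this (tendsto_const_nhds.congr fun n => ?_)
      exact Subtype.ext (h0 (k n)).symm
    exact congrArg Subtype.val h2
  have q1 : (Q : Measure (XB R × XB R)).map Prod.snd = m1 := by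
    have := ProbabilityMeasure.tendsto_map_of_tendsto_of_continuous _ _ hlim continuous_snd
    have h2 : Q.map (f := Prod.snd) measurable_snd.aemeasurable = ⟨m1, hm1⟩ := by
      refine tendsto_nhds_unique this (tendsto_const_nhds.congr fun n => ?_)
      exact Subtype.ext (h1 (k n)).symm
    exact congrArg Subtype.val h2
  refine ⟨(Q : Measure (XB R × XB R)).map (io R), hP, ?_, ?_, ?_, ?_⟩
  · rw [io_fst, q0, e0]
  · rw [io_snd, q1, e1]
  · intro γ hγ g0 g1
    have hγr : ∀ᵐ p ∂γ, p ∈ Set.range (io R) := by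
      rw [← g0] at hs0
      rw [← g1] at hs1
      filter_upwards [ae_of_ae_map measurable_fst.aemeasurable hs0,
        ae_of_ae_map measurable_snd.aemeasurable hs1] with p p0 p1
      exact ⟨(⟨p.1, p0⟩, ⟨p.2, p1⟩), rfl⟩
    obtain ⟨γ', hγ', eγ⟩ := pullback (io_emb R) γ hγr
    rw [← eγ, cost_io, cost_io]
    apply ENNReal.ofReal_le_ofReal
    have f0 : γ'.map Prod.fst = m0 := map_inj (val_emb R) (by rw [← io_fst, eγ, g0, e0])
    have f1 : γ'.map Prod.snd = m1 := map_inj (val_emb R) (by rw [← io_snd, eγ, g1, e1])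
    have l1 := (ProbabilityMeasure.tendsto_iff_forall_integral_tendsto.1 hlim)
      (BoundedContinuousFunction.mkOfCompact (csq R))
    have l2 : Tendsto (fun n => ∫ p, csq R p ∂γ' + 2 * (1 / (((k n : ℕ) : ℝ) + 1))) atTop
        (𝓝 (∫ p, csq R p ∂γ' + 2 * 0)) :=
      tendsto_const_nhds.add ((tendsto_one_div_add_atTop_nhds_zero_nat.comp
        hk.tendsto_atTop).const_mul 2)
    rw [mul_zero, add_zero] at l2
    exact le_of_tendsto_of_tendsto' l1 l2 fun n => hopt (k n) γ' hγ' f0 f1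
  · intro t b ht0 ht1 hb0 hb
    have cev : Continuous (fun p => ev t (io R p)) := (ev_cont t).comp (io_cont R)
    have hl := ProbabilityMeasure.tendsto_map_of_tendsto_of_continuous _ _ hlim cev
    have emap : ∀ π : Measure (XB R × XB R), (π.map (io R)).map (ev t)
        = π.map (fun p => ev t (io R p)) := fun π =>
      Measure.map_map (ev_cont t).measurable (io_cont R).measurable
    have hsup : ∀ π : Measure (XB R × XB R),
        π.map (fun p => ev t (io R p)) (closedBall 0 R)ᶜ = 0 := by
      intro π
      rw [Measure.map_apply cev.measurable isClosed_closedBall.measurableSet.compl]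
      have : (fun p => ev t (io R p)) ⁻¹' (closedBall 0 R)ᶜ = ∅ := by
        ext p
        simp only [Set.mem_preimage, Set.mem_compl_iff, Set.mem_empty_iff_false, iff_false, not_not]
        exact (convex_closedBall (0 : EE) R) p.1.2 p.2.2 (by linarith) ht0.le (by ring)
      rw [this, measure_empty]
    rw [emap]
    refine usc_JE hl (R := R) (fun n => hsup _) (hsup _) hb0 (by linarith) fun n => ?_
    have := hent (k n) t b ht0 ht1 hb0 hb
    rw [e0, e1, emap] at this
    exact this

lemma glue (γ1 γ2 : Measure (EE × EE)) [IsProbabilityMeasure γ1] [IsProbabilityMeasure γ2]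
    (h : γ1.map Prod.snd = γ2.map Prod.fst) :
    ∃ G : Measure (EE × (EE × EE)), IsProbabilityMeasure G ∧
      G.map (fun q => (q.2.1, q.1)) = γ1 ∧ G.map (fun q => (q.1, q.2.2)) = γ2 := by
  have : IsProbabilityMeasure (γ1.map Prod.swap) :=
    Measure.isProbabilityMeasure_map measurable_swap.aemeasurable
  set γs := γ1.map Prod.swap with hγs
  have hf1 : γs.fst = γ2.fst := by
    rw [Measure.fst, Measure.fst, ← h, hγs, Measure.map_map measurable_fst measurable_swap]
    rfl
  have d1 : γ2.fst.compProd γs.condKernel = γs := by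
    rw [← hf1]; exact Measure.disintegrate _ _
  have d2 : γ2.fst.compProd γ2.condKernel = γ2 := Measure.disintegrate _ _
  have k1 := Measure.compProd_map (μ := γ2.fst)
    (κ := ProbabilityTheory.Kernel.prod γs.condKernel γ2.condKernel)
    (f := (Prod.fst : EE × EE → EE)) measurable_fst
  have k2 := Measure.compProd_map (μ := γ2.fst)
    (κ := ProbabilityTheory.Kernel.prod γs.condKernel γ2.condKernel)
    (f := (Prod.snd : EE × EE → EE)) measurable_snd
  rw [← ProbabilityTheory.Kernel.fst_eq, ProbabilityTheory.Kernel.fst_prod, d1] at k1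
  rw [← ProbabilityTheory.Kernel.snd_eq, ProbabilityTheory.Kernel.snd_prod, d2] at k2
  refine ⟨γ2.fst.compProd (ProbabilityTheory.Kernel.prod γs.condKernel γ2.condKernel),
    inferInstance, ?_, k2.symm⟩
  have e : γ1 = γs.map Prod.swap := by
    rw [hγs, Measure.map_map measurable_swap measurable_swap]; simp
  have e2 := congrArg (Measure.map Prod.swap) k1
  exact (e.trans (e2.trans (Measure.map_map measurable_swap (by fun_prop)))).symm

lemma W2_eq (μ ν : Measure EE) :
    W2 μ ν = ⨅ γ ∈ Couplings μ ν, costSup γ ^ (1 / 2 : ℝ) := by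
  unfold W2
  have := fun x => ENNReal.orderIsoRpow_apply (1/2 : ℝ) (by norm_num) x
  simp only [← this, OrderIso.map_iInf]

lemma W2_le {μ ν : Measure EE} {γ} (hγ : γ ∈ Couplings μ ν) :
    W2 μ ν ≤ costSup γ ^ (1 / 2 : ℝ) := by
  rw [W2_eq]; exact iInf₂_le γ hγ

lemma W2_symm_le (μ ν : Measure EE) : W2 μ ν ≤ W2 ν μ := by
  rw [W2_eq ν μ]
  refine le_iInf₂ fun γ hγ => ?_
  obtain ⟨h0, h1, h2⟩ := hγ
  have hm : γ.map Prod.swap ∈ Couplings μ ν := by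
    refine ⟨Measure.isProbabilityMeasure_map measurable_swap.aemeasurable, ?_, ?_⟩
    · rw [Measure.map_map measurable_fst measurable_swap]; exact h2
    · rw [Measure.map_map measurable_snd measurable_swap]; exact h1
  refine (W2_le hm).trans (le_of_eq ?_)
  unfold costSup
  rw [lintegral_map (by fun_prop) measurable_swap]
  simp [edist_comm]

lemma W2_symm (μ ν : Measure EE) : W2 μ ν = W2 ν μ :=
  le_antisymm (W2_symm_le _ _) (W2_symm_le _ _)

lemma W2_triangle (μ ν ρ : Measure EE) : W2 μ ρ ≤ W2 μ ν + W2 ν ρ := by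
  rw [W2_eq μ ν, W2_eq ν ρ]
  rw [ENNReal.iInf_add]
  refine le_iInf fun γ1 => ?_
  rw [ENNReal.iInf_add]
  refine le_iInf fun h1 => ?_
  rw [ENNReal.add_iInf]
  refine le_iInf fun γ2 => ?_
  rw [ENNReal.add_iInf]
  refine le_iInf fun h2 => ?_
  obtain ⟨p1, a1, b1⟩ := h1
  obtain ⟨p2, a2, b2⟩ := h2
  obtain ⟨G, pG, g1, g2⟩ := glue γ1 γ2 (by rw [b1, a2])
  have hm : G.map Prod.snd ∈ Couplings μ ρ := by
    refine ⟨Measure.isProbabilityMeasure_map measurable_snd.aemeasurable, ?_, ?_⟩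
    · rw [Measure.map_map measurable_fst measurable_snd, ← a1, ← g1,
        Measure.map_map measurable_fst (by fun_prop)]; rfl
    · rw [Measure.map_map measurable_snd measurable_snd, ← b2, ← g2,
        Measure.map_map measurable_snd (by fun_prop)]; rfl
  refine (W2_le hm).trans ?_
  unfold costSup
  rw [← g1, ← g2, lintegral_map (by fun_prop) (by fun_prop),
    lintegral_map (by fun_prop) (by fun_prop), lintegral_map (by fun_prop) (by fun_prop)]
  have M := ENNReal.lintegral_Lp_add_le (μ := G) (p := 2)
    (f := fun q => edist q.2.1 q.1) (g := fun q => edist q.1 q.2.2)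
    (by fun_prop) (by fun_prop) (by norm_num)
  simp only [ENNReal.rpow_two] at M
  refine le_trans ?_ M
  gcongr
  exact edist_triangle _ _ _

lemma ev_edist {s t : ℝ} (p : EE × EE) :
    edist (ev s p) (ev t p) = ENNReal.ofReal |s - t| * edist p.1 p.2 := by
  rw [edist_dist, edist_dist, ← ENNReal.ofReal_mul (abs_nonneg _)]
  congr 1
  rw [dist_eq_norm, dist_eq_norm, ← Real.norm_eq_abs, ← norm_neg (p.1 - p.2),
    ← norm_smul]
  congr 1
  unfold ev
  module

lemma ev_coupling (P : Measure (EE × EE)) [IsProbabilityMeasure P] (s t : ℝ) :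
    W2 (P.map (ev s)) (P.map (ev t)) ≤ ENNReal.ofReal |s - t| * costSup P ^ (1 / 2 : ℝ) := by
  have ms := (ev_cont s).measurable
  have mt := (ev_cont t).measurable
  have hm : P.map (fun p => (ev s p, ev t p)) ∈ Couplings (P.map (ev s)) (P.map (ev t)) := by
    refine ⟨Measure.isProbabilityMeasure_map (ms.prodMk mt).aemeasurable, ?_, ?_⟩
    · rw [Measure.map_map measurable_fst (ms.prodMk mt)]; rfl
    · rw [Measure.map_map measurable_snd (ms.prodMk mt)]; rfl
  refine (W2_le hm).trans (le_of_eq ?_)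
  unfold costSup
  rw [lintegral_map (by fun_prop) (ms.prodMk mt)]
  simp only [ev_edist, mul_pow]
  rw [lintegral_const_mul _ (by fun_prop), ENNReal.mul_rpow_of_nonneg _ _ (by norm_num)]
  congr 1
  rw [← ENNReal.rpow_two, ← ENNReal.rpow_mul]; norm_num

lemma ev_zero : ev 0 = Prod.fst := by funext p; simp [ev]
lemma ev_one : ev 1 = Prod.snd := by funext p; simp [ev]

lemma geo_le (P : Measure (EE × EE)) [IsProbabilityMeasure P] {C : ℝ≥0∞}
    (hC : C = costSup P ^ (1 / 2 : ℝ)) (hfin : C ≠ ∞)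
    (hW : W2 (P.map (ev 0)) (P.map (ev 1)) = C) {s t : ℝ} (hs : 0 ≤ s) (hst : s ≤ t) (ht : t ≤ 1) :
    W2 (P.map (ev s)) (P.map (ev t)) = ENNReal.ofReal |s - t| * C := by
  refine le_antisymm (by rw [hC]; exact ev_coupling P s t) ?_
  have h1 := ev_coupling P 0 s
  have h2 := ev_coupling P t 1
  have h3 := W2_triangle (P.map (ev 0)) (P.map (ev s)) (P.map (ev 1))
  have h4 := W2_triangle (P.map (ev s)) (P.map (ev t)) (P.map (ev 1))
  rw [← hC] at h1 h2
  rw [hW] at h3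
  set W := W2 (P.map (ev s)) (P.map (ev t))
  rw [show |0 - s| = s by rw [zero_sub, abs_neg, abs_of_nonneg hs]] at h1
  rw [show |t - 1| = 1 - t by rw [abs_sub_comm, abs_of_nonneg (by linarith)]] at h2
  rw [show |s - t| = t - s by rw [abs_sub_comm, abs_of_nonneg (by linarith)]]
  have h5 : C ≤ (ENNReal.ofReal s * C + ENNReal.ofReal (1 - t) * C) + W := by
    calc C ≤ _ := h3
      _ ≤ ENNReal.ofReal s * C + (W + ENNReal.ofReal (1 - t) * C) := by
        gcongr; exact h4.trans (by gcongr)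
      _ = _ := by ring
  have h6 : C = (ENNReal.ofReal s * C + ENNReal.ofReal (1 - t) * C)
      + ENNReal.ofReal (t - s) * C := by
    rw [← add_mul, ← add_mul, ← ENNReal.ofReal_add hs (by linarith),
      ← ENNReal.ofReal_add (by linarith) (by linarith)]
    rw [show s + (1 - t) + (t - s) = 1 by ring]; simp
  have h7 : (ENNReal.ofReal s * C + ENNReal.ofReal (1 - t) * C)
      + ENNReal.ofReal (t - s) * C ≤ (ENNReal.ofReal s * C + ENNReal.ofReal (1 - t) * C) + W := by
    rw [← h6]; exact h5
  refine (ENNReal.add_le_add_iff_left ?_).1 h7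
  exact ENNReal.add_ne_top.2 ⟨ENNReal.mul_ne_top ENNReal.ofReal_ne_top hfin,
    ENNReal.mul_ne_top ENNReal.ofReal_ne_top hfin⟩

lemma geo_eq (P : Measure (EE × EE)) [IsProbabilityMeasure P] {C : ℝ≥0∞}
    (hC : C = costSup P ^ (1 / 2 : ℝ)) (hfin : C ≠ ∞)
    (hW : W2 (P.map (ev 0)) (P.map (ev 1)) = C) {s t : ℝ}
    (hs : s ∈ Set.Icc (0:ℝ) 1) (ht : t ∈ Set.Icc (0:ℝ) 1) :
    W2 (P.map (ev s)) (P.map (ev t)) = ENNReal.ofReal |s - t| * C := by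
  rcases le_total s t with h | h
  · exact geo_le P hC hfin hW hs.1 h ht.2
  · rw [W2_symm, abs_sub_comm]; exact geo_le P hC hfin hW ht.1 h hs.2

lemma JE_fin (ν : Measure EE) [IsProbabilityMeasure ν] {R b : ℝ}
    (hν : ν (closedBall 0 R)ᶜ = 0) (hb0 : 0 < b) (hb1 : b < 1) : JE b ν ≠ ∞ := by
  refine ne_top_of_le_ne_top ?_ ((JE_le_av ν one_pos hb0 hb1).trans
    (lintegral_mono fun z => av_bound ν hν hb1 z))
  rw [lintegral_indicator isClosed_closedBall.measurableSet, lintegral_const]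
  refine ENNReal.mul_ne_top (ENNReal.rpow_ne_top_of_nonneg (by linarith) ?_) ?_
  · exact ENNReal.div_ne_top one_ne_top (vb_pos one_pos)
  · rw [Measure.restrict_apply_univ]; exact measure_closedBall_lt_top.ne

lemma EntN_eq (ν : Measure EE) [IsProbabilityMeasure ν] {R N : ℝ}
    (hν : ν (closedBall 0 R)ᶜ = 0) (hN : 2 ≤ N) :
    EntN N volume ν = - (JE (1 / N) ν).toReal := by
  have hb0 : 0 < 1 / N := by positivity
  have hb1 : 1 / N < 1 := by rw [div_lt_one (by linarith)]; linarith
  unfold EntN JE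
  have hmeas : Measurable fun z => ν.rnDeriv volume z ^ (1 - 1 / N) :=
    (Measure.measurable_rnDeriv _ _).pow_const _
  rw [← integral_toReal hmeas.aemeasurable
    (ae_lt_top hmeas (JE_fin ν hν hb0 hb1))]
  simp only [ENNReal.toReal_rpow]

/-- (ℝ², ‖·‖_∞, Lebesgue) satisfies CD(0,2): between any two boundedly supported probability
measures there is a W₂-geodesic along which Ent_{N'} is convex for every N' ≥ 2. -/
theorem cd_zero_two_real_plane_sup_norm
    (μ0 μ1 : Measure (ℝ × ℝ)) [IsProbabilityMeasure μ0] [IsProbabilityMeasure μ1]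
    (K0 : Set (ℝ × ℝ)) (hK0 : Bornology.IsBounded K0) (hsupp0 : μ0 K0ᶜ = 0)
    (K1 : Set (ℝ × ℝ)) (hK1 : Bornology.IsBounded K1) (hsupp1 : μ1 K1ᶜ = 0) :
    ∃ μ : ℝ → Measure (ℝ × ℝ),
      μ 0 = μ0 ∧ μ 1 = μ1 ∧
      (∀ t ∈ Set.Icc (0:ℝ) 1,
        IsProbabilityMeasure (μ t) ∧ ∫⁻ z, (‖z‖₊ : ℝ≥0∞) ^ 2 ∂(μ t) < ⊤) ∧
      (∀ s ∈ Set.Icc (0:ℝ) 1, ∀ t ∈ Set.Icc (0:ℝ) 1,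
        W2 (μ s) (μ t) = ENNReal.ofReal |s - t| * W2 μ0 μ1) ∧
      (∀ N' : ℝ, 2 ≤ N' → ∀ t ∈ Set.Icc (0:ℝ) 1,
        EntN N' volume (μ t) ≤ (1 - t) * EntN N' volume μ0 + t * EntN N' volume μ1) := by
  obtain ⟨R0, h0⟩ := hK0.subset_closedBall 0
  obtain ⟨R1, h1⟩ := hK1.subset_closedBall 0
  obtain ⟨R, hR, hR0, hR1⟩ : ∃ R : ℝ, 0 ≤ R ∧ R0 ≤ R ∧ R1 ≤ R :=
    ⟨max 0 (max R0 R1), by simp, by simp, by simp⟩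
  have s0 : μ0 (closedBall 0 R)ᶜ = 0 := measure_mono_null
    (Set.compl_subset_compl.2 (h0.trans (closedBall_subset_closedBall hR0))) hsupp0
  have s1 : μ1 (closedBall 0 R)ᶜ = 0 := measure_mono_null
    (Set.compl_subset_compl.2 (h1.trans (closedBall_subset_closedBall hR1))) hsupp1
  have hs0 : ∀ᵐ z ∂μ0, z ∈ closedBall (0 : EE) R := s0
  have hs1 : ∀ᵐ z ∂μ1, z ∈ closedBall (0 : EE) R := s1
  obtain ⟨P, hP, P0, P1, hopt, hent⟩ := limit_plan μ0 μ1 hR hs0 hs1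
  have q0 : ∀ᵐ p ∂P, p.1 ∈ closedBall (0 : EE) R := by
    rw [← P0] at hs0; exact ae_of_ae_map measurable_fst.aemeasurable hs0
  have q1 : ∀ᵐ p ∂P, p.2 ∈ closedBall (0 : EE) R := by
    rw [← P1] at hs1; exact ae_of_ae_map measurable_snd.aemeasurable hs1
  have hpr : ∀ t, IsProbabilityMeasure (P.map (ev t)) := fun t =>
    Measure.isProbabilityMeasure_map (ev_cont t).measurable.aemeasurable
  have hst : ∀ t ∈ Set.Icc (0:ℝ) 1, ∀ᵐ z ∂(P.map (ev t)), z ∈ closedBall (0 : EE) R := by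
    intro t ht
    refine (ae_map_iff (ev_cont t).measurable.aemeasurable
      (p := fun z => z ∈ closedBall (0 : EE) R) isClosed_closedBall.measurableSet).2 ?_
    filter_upwards [q0, q1] with p hp0 hp1
    exact (convex_closedBall (0 : EE) R) hp0 hp1 (by linarith [ht.2]) ht.1 (by ring)
  have E0 : P.map (ev 0) = μ0 := by rw [ev_zero, P0]
  have E1 : P.map (ev 1) = μ1 := by rw [ev_one, P1]
  have hW : W2 μ0 μ1 = costSup P ^ (1 / 2 : ℝ) := by
    refine le_antisymm (W2_le ⟨hP, P0, P1⟩) ?_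
    rw [W2_eq]
    refine le_iInf₂ fun γ hγ => ?_
    gcongr
    exact hopt γ hγ.1 hγ.2.1 hγ.2.2
  have hWfin : W2 μ0 μ1 ≠ ∞ := by
    rw [hW]
    refine ENNReal.rpow_ne_top_of_nonneg (by norm_num) ?_
    have : costSup P ≤ ∫⁻ _, (ENNReal.ofReal (R + R)) ^ 2 ∂P := by
      refine lintegral_mono_ae ?_
      filter_upwards [q0, q1] with p hp0 hp1
      gcongr
      rw [edist_dist]
      apply ENNReal.ofReal_le_ofReal
      rw [mem_closedBall] at hp0 hp1
      rw [dist_comm] at hp1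
      linarith [dist_triangle p.1 0 p.2]
    refine ne_top_of_le_ne_top ?_ this
    simp
  refine ⟨fun t => P.map (ev t), E0, E1, fun t ht => ⟨hpr t, ?_⟩, fun s hs t ht => ?_, ?_⟩
  · have : ∫⁻ z, (‖z‖₊ : ℝ≥0∞) ^ 2 ∂(P.map (ev t)) ≤
        ∫⁻ _, (ENNReal.ofReal R) ^ 2 ∂(P.map (ev t)) := by
      refine lintegral_mono_ae ?_
      filter_upwards [hst t ht] with z hz
      gcongr
      rw [mem_closedBall, dist_zero_right] at hz
      rw [← enorm_eq_nnnorm, ← ofReal_norm]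
      exact ENNReal.ofReal_le_ofReal hz
    refine this.trans_lt ?_
    simp
  · exact geo_eq P hW hWfin (by rw [E0, E1]) hs ht
  · intro N hN t ht
    have hb0 : 0 < 1 / N := by positivity
    have hb : 1 / N ≤ 1 / 2 := one_div_le_one_div_of_le (by norm_num) hN
    have hb1 : 1 / N < 1 := by linarith
    have := hpr t
    simp only []
    rcases ht.1.eq_or_lt with rfl | t0
    · rw [E0]; simp
    rcases ht.2.eq_or_lt with rfl | t1
    · rw [E1]; simp
    rw [EntN_eq _ (hst t ht) hN, EntN_eq _ s0 hN, EntN_eq _ s1 hN]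
    have h := hent t (1 / N) t0 t1 hb0 hb
    have h' := ENNReal.toReal_mono (JE_fin _ (hst t ht) hb0 hb1) h
    rw [ENNReal.toReal_add (ENNReal.mul_ne_top ENNReal.ofReal_ne_top (JE_fin _ s0 hb0 hb1))
      (ENNReal.mul_ne_top ENNReal.ofReal_ne_top (JE_fin _ s1 hb0 hb1)), ENNReal.toReal_mul,
      ENNReal.toReal_mul, ENNReal.toReal_ofReal (by linarith), ENNReal.toReal_ofReal t0.le] at h'
    linarith

end
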